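/- arXiv:1605.06322 — 11 statements merged into one kernel-verified Lean document; each statement's English description precedes it below -/
import Mathlib

section
/- Consider the threshold dynamics θ(t+1) = F θ(t) on n agents with complete interaction graph, where F = (β/(β+n−1)) I_n + (1/(β+n−1)) (𝟙𝟙ᵀ − I_n) for a parameter β > 0. If θ(0) = (0, τ, τ, …, τ)ᵀ with 0 < τ < 1, then for every t ≥ 0: θ_1(t) = ((n−1)/n) τ (1 − λ_c^t) and θ_i(t) = ((n−1)/n) τ (1 + λ_c^t/(n−1)) for i = 2, …, n, where λ_c = (β−1)/(β+n−1). -/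
/-! Since `F = λ I + (1/D) 𝟙𝟙ᵀ` with `D = β + n - 1` and `λ = (β - 1)/D`, one step sends `θ i` to
`λ θ i + (∑ j, θ j)/D`. The total `∑ j, θ j = (n - 1) τ` is conserved because `λ + n/D = 1`, so every
coordinate obeys the same scalar affine recursion, whose fixed point is the mean `(n - 1) τ / n`:
the deviation of each coordinate from the mean is multiplied by `λ` at every step. -/

/-- Complete-graph threshold dynamics: explicit formula for θ(t). -/
theorem complete_graph_threshold_formula
    (n : ℕ) [NeZero n] (hn : 2 ≤ n) (β τ : ℝ) (hβ : 0 < β)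
    (hτ0 : 0 < τ) (hτ1 : τ < 1)
    (F : Matrix (Fin n) (Fin n) ℝ)
    (hF : ∀ i j : Fin n, F i j = if i = j then β / (β + n - 1) else 1 / (β + n - 1))
    (θ : ℕ → Fin n → ℝ)
    (hθ0 : ∀ i : Fin n, θ 0 i = if i = 0 then 0 else τ)
    (hθ : ∀ t : ℕ, θ (t + 1) = F.mulVec (θ t)) :
    ∀ t : ℕ,
      θ t 0 = ((n : ℝ) - 1) / n * τ * (1 - ((β - 1) / (β + n - 1)) ^ t) ∧
      ∀ i : Fin n, i ≠ 0 →
        θ t i = ((n : ℝ) - 1) / n * τ * (1 + ((β - 1) / (β + n - 1)) ^ t / (n - 1)) := by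
  have hn' : (2 : ℝ) ≤ n := by exact_mod_cast hn
  have hn0 : (n : ℝ) ≠ 0 := by linarith
  have hn1 : (n : ℝ) - 1 ≠ 0 := by linarith
  have hD : β + n - 1 ≠ 0 := by linarith
  have step : ∀ t i, θ (t + 1) i =
      (β - 1) / (β + n - 1) * θ t i + (∑ j, θ t j) / (β + n - 1) := by
    intro t i
    have hrow : ∀ j, F i j * θ t j =
        (if i = j then (β - 1) / (β + n - 1) * θ t j else 0) + θ t j / (β + n - 1) := by
      intro j
      rw [hF]
      split_ifs <;> ring
    rw [hθ, Matrix.mulVec, dotProduct, Finset.sum_congr rfl fun j _ => hrow j,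
      Finset.sum_add_distrib, ← Finset.sum_div]
    simp
  have total : ∀ t, ∑ j, θ t j = (n - 1) * τ := by
    intro t
    induction t with
    | zero =>
      have h : ∀ j, θ 0 j = τ - (if j = 0 then τ else 0) := by
        intro j
        rw [hθ0]
        split_ifs <;> ring
      rw [Finset.sum_congr rfl fun j _ => h j, Finset.sum_sub_distrib]
      simp
      ring
    | succ t ih =>
      rw [Finset.sum_congr rfl fun j _ => step t j, Finset.sum_add_distrib, ← Finset.mul_sum, ih]
      simp
      field_simp
      ring
  have closed : ∀ t i, θ t i = (n - 1) / n * τ +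
      ((β - 1) / (β + n - 1)) ^ t * (θ 0 i - (n - 1) / n * τ) := by
    intro t i
    induction t with
    | zero => ring
    | succ t ih =>
      rw [step, total, ih, pow_succ]
      -- The mean is fixed by the scalar affine recursion.
      have hfix : (β - 1) / (β + n - 1) * ((n - 1) / n * τ) + (n - 1) * τ / (β + n - 1)
          = ((n : ℝ) - 1) / n * τ := by
        field_simp
        ring
      linear_combination hfix
  intro t
  refine ⟨?_, fun i hi => ?_⟩
  · rw [closed, hθ0, if_pos rfl]
    ring
  · rw [closed, hθ0, if_neg hi]
    generalize ((β - 1) / (β + n - 1)) ^ t = x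
    field_simp
    ring
end

section
/- Consider the threshold dynamics θ(t+1) = F θ(t) on n agents with complete interaction graph, F = (β/(β+n−1)) I_n + (1/(β+n−1)) (𝟙𝟙ᵀ − I_n), β > 0, and θ(0) = (0, τ, …, τ)ᵀ with 0 < τ < 1. Then lim_{t→∞} θ(t) = ((n−1)/n) τ 𝟙. Moreover, if β > 1, then θ_1(t+1) > θ_1(t) and θ_i(t+1) < θ_i(t) for every i = 2, …, n and every t ≥ 0. -/
/-!
The matrix `F` acts as `v ↦ (∑ v + (β - 1) v) / (β + n - 1)`: it fixes constant vectors and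
multiplies vectors of sum zero by `r = (β - 1) / (β + n - 1)`. As `θ 0` has mean
`c = (n - 1) / n * τ`, this gives the closed form `θ t i = c + r ^ t * (θ 0 i - c)`.
Since `|r| < 1`, the trajectory tends to `c`. If `β > 1` then `0 < r < 1`, so `r ^ t` is strictly
decreasing, and monotonicity follows from the signs `θ 0 0 - c = -c < 0` and
`θ 0 i - c = τ / n > 0` for `i ≠ 0`.
-/

theorem mulVec_complete_graph {n : ℕ} {β : ℝ} {F : Matrix (Fin n) (Fin n) ℝ}
    (hF : ∀ i j : Fin n, F i j = if i = j then β / (β + n - 1) else 1 / (β + n - 1))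
    (v : Fin n → ℝ) (i : Fin n) :
    F.mulVec v i = (∑ j, v j + (β - 1) * v i) / (β + n - 1) := by
  have h : ∀ j, F i j * v j =
      v j / (β + n - 1) + if i = j then (β - 1) * v j / (β + n - 1) else 0 := by
    intro j
    rw [hF]
    split_ifs <;> ring
  simp only [Matrix.mulVec, dotProduct, h, Finset.sum_add_distrib, Finset.sum_ite_eq,
    Finset.mem_univ, if_true, ← Finset.sum_div]
  ring

/-- Complete-graph threshold dynamics: limit and monotonicity. -/
theorem complete_graph_threshold_limit_and_monotonicity
    (n : ℕ) [NeZero n] (hn : 2 ≤ n) (β τ : ℝ) (hβ : 0 < β)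
    (hτ0 : 0 < τ) (hτ1 : τ < 1)
    (F : Matrix (Fin n) (Fin n) ℝ)
    (hF : ∀ i j : Fin n, F i j = if i = j then β / (β + n - 1) else 1 / (β + n - 1))
    (θ : ℕ → Fin n → ℝ)
    (hθ0 : ∀ i : Fin n, θ 0 i = if i = 0 then 0 else τ)
    (hθ : ∀ t : ℕ, θ (t + 1) = F.mulVec (θ t)) :
    Filter.Tendsto θ Filter.atTop (nhds (fun _ : Fin n => ((n : ℝ) - 1) / n * τ)) ∧
    (1 < β → ∀ t : ℕ,
      θ t 0 < θ (t + 1) 0 ∧ ∀ i : Fin n, i ≠ 0 → θ (t + 1) i < θ t i) := by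
  have hn' : (2 : ℝ) ≤ n := by exact_mod_cast hn
  have hn0 : (n : ℝ) ≠ 0 := by linarith
  have hd : 0 < β + n - 1 := by linarith
  obtain ⟨c, hc⟩ : ∃ c, c = ((n : ℝ) - 1) / n * τ := ⟨_, rfl⟩
  obtain ⟨r, hr⟩ : ∃ r, r = (β - 1) / (β + n - 1) := ⟨_, rfl⟩
  have hnc : n * c = (n - 1) * τ := by rw [hc]; field_simp
  have hsum0 : ∑ j, θ 0 j = n * c := by
    have h : ∀ j, θ 0 j = τ - if j = 0 then τ else 0 := by
      intro j
      rw [hθ0]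
      split_ifs <;> ring
    simp only [h, Finset.sum_sub_distrib, Finset.sum_ite_eq', Finset.mem_univ, if_true,
      Finset.sum_const, Finset.card_univ, Fintype.card_fin, nsmul_eq_mul]
    linarith
  have closed : ∀ t i, θ t i = c + r ^ t * (θ 0 i - c) := by
    intro t
    induction t with
    | zero => intro i; simp
    | succ t ih =>
      intro i
      have hsum : ∑ j, θ t j = n * c := by
        simp only [ih, Finset.sum_add_distrib, ← Finset.mul_sum, Finset.sum_sub_distrib, hsum0,
          Finset.sum_const, Finset.card_univ, Fintype.card_fin, nsmul_eq_mul]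
        ring
      rw [hθ, mulVec_complete_graph hF, hsum, ih i, pow_succ]
      have hrd : r * (β + n - 1) = β - 1 := by rw [hr]; field_simp
      rw [div_eq_iff hd.ne']
      linear_combination -(r ^ t * (θ 0 i - c)) * hrd
  have hr1 : r < 1 := by rw [hr, div_lt_one hd]; linarith
  have hr2 : -1 < r := by rw [hr, lt_div_iff₀ hd]; linarith
  rw [← hc]
  refine ⟨?_, fun hβ1 t => ?_⟩
  · rw [tendsto_pi_nhds]
    intro i
    have h := ((tendsto_pow_atTop_nhds_zero_of_abs_lt_one (abs_lt.2 ⟨hr2, hr1⟩)).mul_const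
      (θ 0 i - c)).const_add c
    rw [zero_mul, add_zero] at h
    exact h.congr fun t => (closed t i).symm
  · have hr0 : 0 < r := by rw [hr]; exact div_pos (by linarith) hd
    have hp : r ^ (t + 1) < r ^ t := pow_lt_pow_right_of_lt_one₀ hr0 hr1 (Nat.lt_succ_self t)
    have hc0 : 0 < c := by
      rw [hc]; exact mul_pos (div_pos (by linarith) (by linarith)) hτ0
    have hcτ : c < τ := by
      have : (n : ℝ) * c < n * τ := by linarith
      exact lt_of_mul_lt_mul_left this (by linarith)
    refine ⟨?_, fun i hi => ?_⟩
    · rw [closed t, closed (t + 1), hθ0, if_pos rfl]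
      nlinarith
    · rw [closed t, closed (t + 1), hθ0, if_neg hi]
      nlinarith
end

section
/- Consider the threshold model on n agents with complete graph in the WAL setting (G = F = (β/(β+n−1)) I_n + (1/(β+n−1)) (𝟙𝟙ᵀ − I_n)), initial condition θ(0) = (0, τ, …, τ)ᵀ, 0 < τ < 1, and a(0) = (1, 0, …, 0)ᵀ. Then a(t) = 𝟙 for all t ≥ 1 if and only if τ ≤ min{β/(n−1), 1/(β+n−2)}, and a(t) = 0 for all t ≥ 1 if and only if τ > max{β/(n−1), 1/(β+n−2)}. -/
/-!
On every vector `F x = ((β - 1) x + (∑ x) 𝟙) / (β + n - 1)`. Applied to `θ 0` and `a 0` this gives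
the first actions in closed form: `a 1 0 = 1` iff `τ ≤ β / (n - 1)`, and for `i ≠ 0`, `a 1 i = 1`
iff `τ ≤ 1 / (β + n - 2)`. Both unanimous states then persist: `F` is row stochastic, so thresholds
stay at most `1 = (F 𝟙) i`, and `F` has positive entries, so from `t = 1` on the thresholds stay
above `0 = (F 0) i`. Hence unanimity for all `t ≥ 1` is equivalent to unanimity at `t = 1`.
-/

/-- Complete graph, WAL setting: one-step asymptotic behavior. -/
theorem complete_graph_WAL_one_step
    (n : ℕ) [NeZero n] (hn : 2 ≤ n) (β τ : ℝ) (hβ : 0 < β)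
    (hτ0 : 0 < τ) (hτ1 : τ < 1)
    (F : Matrix (Fin n) (Fin n) ℝ)
    (hF : ∀ i j : Fin n, F i j = if i = j then β / (β + n - 1) else 1 / (β + n - 1))
    (θ a : ℕ → Fin n → ℝ)
    (hθ0 : ∀ i : Fin n, θ 0 i = if i = 0 then 0 else τ)
    (ha0 : ∀ i : Fin n, a 0 i = if i = 0 then 1 else 0)
    (hθ : ∀ t : ℕ, θ (t + 1) = F.mulVec (θ t))
    (ha : ∀ (t : ℕ) (i : Fin n),
      a (t + 1) i = if θ (t + 1) i ≤ F.mulVec (a t) i then 1 else 0) :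
    ((∀ t : ℕ, 1 ≤ t → a t = fun _ : Fin n => (1 : ℝ)) ↔
      τ ≤ min (β / ((n : ℝ) - 1)) (1 / (β + n - 2))) ∧
    ((∀ t : ℕ, 1 ≤ t → a t = fun _ : Fin n => (0 : ℝ)) ↔
      τ > max (β / ((n : ℝ) - 1)) (1 / (β + n - 2))) := by
  have hn' : (2 : ℝ) ≤ n := by exact_mod_cast hn
  have hD : 0 < β + n - 1 := by linarith
  have hn1 : 0 < (n : ℝ) - 1 := by linarith
  have hn2 : 0 < β + n - 2 := by linarith
  have hFx : ∀ (x : Fin n → ℝ) (i : Fin n),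
      F.mulVec x i = ((β - 1) * x i + ∑ j, x j) / (β + n - 1) := by
    intro x i
    have h : ∀ j, F i j * x j =
        (if i = j then (β - 1) / (β + n - 1) * x j else 0) + x j / (β + n - 1) := by
      intro j
      rw [hF]
      split_ifs <;> ring
    simp only [Matrix.mulVec, dotProduct, h, Finset.sum_add_distrib, Finset.sum_ite_eq,
      Finset.mem_univ, if_true, ← Finset.sum_div]
    ring
  have hFpos : ∀ i j, 0 < F i j := by
    intro i j
    rw [hF]
    split_ifs <;> positivity
  have hF1 : ∀ i, F.mulVec (fun _ => (1 : ℝ)) i = 1 := by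
    intro i
    rw [hFx]
    simp only [Finset.sum_const, Finset.card_univ, Fintype.card_fin, nsmul_eq_mul]
    rw [div_eq_one_iff_eq hD.ne']
    ring
  have hF0 : ∀ i, F.mulVec (fun _ => (0 : ℝ)) i = 0 := by
    intro i
    rw [hFx]
    simp
  have hsa : ∑ j, a 0 j = 1 := by simp [ha0]
  have hsθ : ∑ j, θ 0 j = (n - 1) * τ := by
    have h : ∀ j, θ 0 j = τ - if j = 0 then τ else 0 := by
      intro j
      rw [hθ0]
      split_ifs <;> ring
    simp only [h, Finset.sum_sub_distrib, Finset.sum_const, Finset.card_univ, Fintype.card_fin,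
      nsmul_eq_mul, Finset.sum_ite_eq', Finset.mem_univ, if_true]
    ring
  have hle : ∀ t i, θ t i ≤ 1 := by
    intro t
    induction t with
    | zero =>
      intro i
      rw [hθ0]
      split_ifs <;> linarith
    | succ t ih =>
      intro i
      rw [hθ, ← hF1 i]
      change ∑ j, F i j * θ t j ≤ ∑ j, F i j * 1
      exact Finset.sum_le_sum fun j _ => mul_le_mul_of_nonneg_left (ih j) (hFpos i j).le
  have hpos : ∀ t i, 0 < θ (t + 1) i := by
    intro t
    induction t with
    | zero =>
      intro i
      rw [hθ, hFx, hsθ, hθ0]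
      apply div_pos _ hD
      split_ifs
      · nlinarith
      · nlinarith [mul_pos hn2 hτ0]
    | succ t ih =>
      intro i
      rw [hθ]
      exact Finset.sum_pos (fun j _ => mul_pos (hFpos i j) (ih j)) ⟨0, Finset.mem_univ _⟩
  have ha1_zero : a 1 0 = if τ ≤ β / (n - 1) then 1 else 0 := by
    rw [ha 0 0, hθ, hFx, hFx, hsθ, hsa, hθ0, ha0]
    simp only [if_true]
    congr 1
    rw [div_le_div_iff_of_pos_right hD, le_div_iff₀ hn1, eq_iff_iff]
    constructor <;> intro h <;> linarith
  have ha1_ne : ∀ i, i ≠ 0 → a 1 i = if τ ≤ 1 / (β + n - 2) then 1 else 0 := by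
    intro i hi
    rw [ha 0 i, hθ, hFx, hFx, hsθ, hsa, hθ0, ha0]
    simp only [hi, if_false]
    congr 1
    rw [div_le_div_iff_of_pos_right hD, le_div_iff₀ hn2, eq_iff_iff]
    constructor <;> intro h <;> linarith
  obtain ⟨k, hk⟩ : ∃ k : Fin n, k ≠ 0 := by
    have : Nontrivial (Fin n) := Fin.nontrivial_iff_two_le.mpr hn
    exact exists_ne 0
  refine ⟨⟨fun h => ?_, fun h => ?_⟩, ⟨fun h => ?_, fun h => ?_⟩⟩
  · have h0 := congrFun (h 1 le_rfl) 0
    have h1 := congrFun (h 1 le_rfl) k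
    rw [ha1_zero] at h0
    rw [ha1_ne k hk] at h1
    refine le_min ?_ ?_
    · by_contra hc
      simp [hc] at h0
    · by_contra hc
      simp only [if_neg hc] at h1
      exact zero_ne_one h1
  · obtain ⟨h0, h1⟩ := le_min_iff.mp h
    intro t ht
    induction t, ht using Nat.le_induction with
    | base =>
      funext i
      by_cases hi : i = 0
      · rw [hi, ha1_zero, if_pos h0]
      · rw [ha1_ne i hi, if_pos h1]
    | succ t _ ih =>
      funext i
      rw [ha, ih, hF1, if_pos (hle _ _)]
  · have h0 := congrFun (h 1 le_rfl) 0
    have h1 := congrFun (h 1 le_rfl) k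
    rw [ha1_zero] at h0
    rw [ha1_ne k hk] at h1
    refine max_lt ?_ ?_
    · by_contra! hc
      simp [hc] at h0
    · by_contra! hc
      rw [if_pos hc] at h1
      exact one_ne_zero h1
  · obtain ⟨h0, h1⟩ := max_lt_iff.mp h
    intro t ht
    induction t, ht using Nat.le_induction with
    | base =>
      funext i
      by_cases hi : i = 0
      · rw [hi, ha1_zero, if_neg h0.not_ge]
      · rw [ha1_ne i hi, if_neg h1.not_ge]
    | succ t _ ih =>
      funext i
      rw [ha, ih, hF0, if_neg (hpos _ _).not_ge]
end

section
/- Consider the threshold model on n agents with complete graph in the UAL setting: F = (β/(β+n−1)) I_n + (1/(β+n−1)) (𝟙𝟙ᵀ − I_n) and G = 𝟙𝟙ᵀ/n, with initial condition θ(0) = (0, τ, …, τ)ᵀ, 0 < τ < 1, and a(0) = (1, 0, …, 0)ᵀ. Define η(β) = (β+n−1)/(n(β+n−2)). Then: (i) for β > 1: if τ < 1/(n−1) then a_∞ = 𝟙; if τ > 1/(n−1) then a_∞ = 0; if τ = 1/(n−1) then a(t) = a(0) for all t ≥ 1. (ii) For β ≤ 1: if τ ≤ η(β) then a_∞ = 𝟙;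 otherwise a_∞ = 0. -/
/-!
Write `D = β + n - 1`, `lam = (β - 1) / D` and `m = (n - 1) τ / n`, the mean of `θ 0`. The matrix `F`
equals `lam • 1 + D⁻¹ • 𝟙𝟙ᵀ`, so it fixes `𝟙` and acts as `lam`, with `|lam| < 1`, on vectors of mean
zero; therefore `θ t i = m + c i * lam ^ t`, where `c` is the deviation of `θ 0` from its mean
(`threshold_formula`). Every agent sees the same fraction `p = (∑ j, a t j) / n`.

* All thresholds stay `≤ τ < 1`, so the all-active pattern is absorbing. All thresholds are positive
  from time `1` on, so the all-inactive pattern is absorbing as well.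
* If `(n - 1) τ < 1`, that is `m < 1 / n`, at each time some threshold is at most `m`, hence at most
  `1 / n`; so the active set never becomes empty and `p ≥ 1 / n` forever. Since `θ t → m < 1 / n`,
  everybody is eventually active (`tendsto_one_of_mean_lt`). This covers `β > 1`, `τ < 1 / (n - 1)`,
  and also `n = 2`, `β ≤ 1`, where the active agents may alternate for a while.
* If `β > 1` and `m ≥ 1 / n`, the agents other than `0` have thresholds above `m`, so they never
  activate, and agent `0` stays active exactly as long as its increasing threshold is at most `1 / n`.
* If `β ≤ 1`, the condition `τ ≤ η(β)` says `θ 1 i ≤ 1 / n` for `i ≠ 0`. If it holds and `n ≥ 3`,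
  then `p ≥ (n - 1) / n ≥ τ` at time `2` and everybody activates; if it fails, nobody is active at
  time `1`, because `lam ≤ 0` gives `θ 1 0 ≥ m ≥ θ 1 i`.
-/

/-- Deviation of the initial thresholds `(0, τ, …, τ)` from their mean `(n - 1) τ / n`. -/
noncomputable def dev (n : ℕ) [NeZero n] (τ : ℝ) (i : Fin n) : ℝ :=
  if i = 0 then -(((n : ℝ) - 1) * τ / n) else τ / n

lemma sum_dev (n : ℕ) [NeZero n] (τ : ℝ) : ∑ i, dev n τ i = 0 := by
  have hn : (n : ℝ) ≠ 0 := by exact_mod_cast NeZero.ne n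
  have h : ∀ i, dev n τ i = τ / n + if i = 0 then -τ else 0 := by
    intro i
    unfold dev
    split_ifs
    · field_simp
      ring
    · ring
  simp only [h, Finset.sum_add_distrib, Finset.sum_ite_eq', Finset.mem_univ, if_true,
    Finset.sum_const, Finset.card_univ, Fintype.card_fin, nsmul_eq_mul]
  field_simp
  ring

lemma mulVec_complete (n : ℕ) (β : ℝ) (F : Matrix (Fin n) (Fin n) ℝ)
    (hF : ∀ i j : Fin n, F i j = if i = j then β / (β + n - 1) else 1 / (β + n - 1))
    (x : Fin n → ℝ) (i : Fin n) :
    F.mulVec x i = (∑ j, x j) / (β + n - 1) + (β - 1) / (β + n - 1) * x i := by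
  have h : ∀ j, F i j * x j = x j / (β + n - 1)
      + if i = j then (β - 1) / (β + n - 1) * x j else 0 := by
    intro j
    rw [hF]
    split_ifs <;> ring
  simp only [Matrix.mulVec, dotProduct, h, Finset.sum_add_distrib, Finset.sum_ite_eq,
    Finset.mem_univ, if_true, Finset.sum_div]

lemma threshold_formula (n : ℕ) [NeZero n] (hn : 2 ≤ n) (β τ : ℝ) (hβ : 0 < β)
    (F : Matrix (Fin n) (Fin n) ℝ)
    (hF : ∀ i j : Fin n, F i j = if i = j then β / (β + n - 1) else 1 / (β + n - 1))
    (θ : ℕ → Fin n → ℝ)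
    (hθ0 : ∀ i : Fin n, θ 0 i = if i = 0 then 0 else τ)
    (hθ : ∀ t : ℕ, θ (t + 1) = F.mulVec (θ t)) (t : ℕ) (i : Fin n) :
    θ t i = ((n : ℝ) - 1) * τ / n + dev n τ i * ((β - 1) / (β + n - 1)) ^ t := by
  have hn' : (2 : ℝ) ≤ n := by exact_mod_cast hn
  have hD : β + n - 1 ≠ 0 := by linarith
  induction t generalizing i with
  | zero =>
    rw [hθ0, dev]
    split_ifs
    · ring
    · field_simp
      ring
  | succ t ih =>
    rw [hθ, mulVec_complete n β F hF]
    simp only [ih, Finset.sum_add_distrib, ← Finset.sum_mul, sum_dev, Finset.sum_const,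
      Finset.card_univ, Fintype.card_fin, nsmul_eq_mul, pow_succ]
    field_simp
    ring

/-- Each row of `F` is a probability vector, so the bound `τ` on the thresholds propagates. -/
lemma threshold_le (n : ℕ) [NeZero n] (hn : 2 ≤ n) (β τ : ℝ) (hβ : 0 < β) (hτ0 : 0 < τ)
    (F : Matrix (Fin n) (Fin n) ℝ)
    (hF : ∀ i j : Fin n, F i j = if i = j then β / (β + n - 1) else 1 / (β + n - 1))
    (θ : ℕ → Fin n → ℝ)
    (hθ0 : ∀ i : Fin n, θ 0 i = if i = 0 then 0 else τ)
    (hθ : ∀ t : ℕ, θ (t + 1) = F.mulVec (θ t)) (t : ℕ) (i : Fin n) :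
    θ t i ≤ τ := by
  have hn' : (2 : ℝ) ≤ n := by exact_mod_cast hn
  have hD : 0 < β + n - 1 := by linarith
  induction t generalizing i with
  | zero =>
    rw [hθ0]
    split_ifs <;> linarith
  | succ t ih =>
    have h1 : F.mulVec (θ t) i ≤ F.mulVec (fun _ => τ) i := by
      simp only [Matrix.mulVec, dotProduct]
      refine Finset.sum_le_sum fun j _ => mul_le_mul_of_nonneg_left (ih j) ?_
      rw [hF]
      split_ifs <;> positivity
    have h2 : F.mulVec (fun _ => τ) i = τ := by
      rw [mulVec_complete n β F hF]
      simp only [Finset.sum_const, Finset.card_univ, Fintype.card_fin, nsmul_eq_mul]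
      field_simp
      ring
    rw [hθ]
    linarith

lemma abs_lam_lt_one (n : ℕ) (hn : 2 ≤ n) (β : ℝ) (hβ : 0 < β) :
    |(β - 1) / (β + n - 1)| < 1 := by
  have hn' : (2 : ℝ) ≤ n := by exact_mod_cast hn
  have hD : 0 < β + n - 1 := by linarith
  rw [abs_lt, lt_div_iff₀ hD, div_lt_one hD]
  constructor <;> linarith

lemma threshold_pos (n : ℕ) [NeZero n] (hn : 2 ≤ n) (τ lam : ℝ) (hτ0 : 0 < τ)
    (hlam : |lam| < 1) (t : ℕ) (i : Fin n) :
    0 < ((n : ℝ) - 1) * τ / n + dev n τ i * lam ^ (t + 1) := by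
  have hn' : (2 : ℝ) ≤ n := by exact_mod_cast hn
  have hp : |lam ^ (t + 1)| < 1 := by
    rw [abs_pow]
    exact pow_lt_one₀ (abs_nonneg _) hlam (Nat.succ_ne_zero t)
  obtain ⟨h1, h2⟩ := abs_lt.mp hp
  have hq : 0 < τ / n := by positivity
  unfold dev
  split_ifs
  · have : 0 < (((n : ℝ) - 1) * (τ / n)) * (1 - lam ^ (t + 1)) :=
      mul_pos (mul_pos (by linarith) hq) (by linarith)
    calc (0 : ℝ) < _ := this
      _ = _ := by ring
  · have : 0 < τ / n * ((n : ℝ) - 1 + lam ^ (t + 1)) := mul_pos hq (by linarith)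
    calc (0 : ℝ) < _ := this
      _ = _ := by ring

lemma one_le_sum (n : ℕ) (x : Fin n → ℝ) (hx : ∀ i, 0 ≤ x i) (i : Fin n) (hi : x i = 1) :
    1 ≤ ∑ j, x j :=
  hi ▸ Finset.single_le_sum (f := x) (fun j _ => hx j) (Finset.mem_univ i)

lemma activity_nonneg (n : ℕ) [NeZero n] (θ a : ℕ → Fin n → ℝ)
    (ha0 : ∀ i : Fin n, a 0 i = if i = 0 then 1 else 0)
    (ha : ∀ (t : ℕ) (i : Fin n),
      a (t + 1) i = if θ (t + 1) i ≤ (∑ j, a t j) / n then 1 else 0) (t : ℕ) (i : Fin n) :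
    0 ≤ a t i := by
  cases t with
  | zero =>
    rw [ha0]
    split_ifs <;> norm_num
  | succ t =>
    rw [ha]
    split_ifs <;> norm_num

lemma tendsto_of_absorbing (n : ℕ) (a : ℕ → Fin n → ℝ) (x : Fin n → ℝ) (T : ℕ)
    (hT : a T = x) (hstep : ∀ t, T ≤ t → a t = x → a (t + 1) = x) :
    Filter.Tendsto a Filter.atTop (nhds x) := by
  refine tendsto_const_nhds.congr' ?_
  filter_upwards [Filter.eventually_ge_atTop T] with t ht
  induction t, ht using Nat.le_induction with
  | base => exact hT.symm
  | succ t ht ih => exact (hstep t ht ih.symm).symm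

lemma tendsto_one_of_eq (n : ℕ) [NeZero n] (θ a : ℕ → Fin n → ℝ)
    (ha : ∀ (t : ℕ) (i : Fin n),
      a (t + 1) i = if θ (t + 1) i ≤ (∑ j, a t j) / n then 1 else 0)
    (hle : ∀ t i, θ t i ≤ 1) (T : ℕ) (hT : ∀ i, a T i = 1) :
    Filter.Tendsto a Filter.atTop (nhds (fun _ : Fin n => (1 : ℝ))) := by
  have hn : (n : ℝ) ≠ 0 := by exact_mod_cast NeZero.ne n
  refine tendsto_of_absorbing n a _ T (funext hT) fun t _ h => funext fun i => ?_
  rw [ha, if_pos]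
  simp only [h, Finset.sum_const, Finset.card_univ, Fintype.card_fin, nsmul_eq_mul, mul_one,
    div_self hn]
  exact hle _ _

lemma tendsto_zero_of_eq (n : ℕ) (θ a : ℕ → Fin n → ℝ)
    (ha : ∀ (t : ℕ) (i : Fin n),
      a (t + 1) i = if θ (t + 1) i ≤ (∑ j, a t j) / n then 1 else 0)
    (hpos : ∀ t i, 0 < θ (t + 1) i) (T : ℕ) (hT : ∀ i, a T i = 0) :
    Filter.Tendsto a Filter.atTop (nhds (fun _ : Fin n => (0 : ℝ))) := by
  refine tendsto_of_absorbing n a _ T (funext hT) fun t _ h => funext fun i => ?_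
  rw [ha, if_neg]
  simp only [h, Finset.sum_const_zero, zero_div, not_le]
  exact hpos _ _

/-- If the mean threshold is below `1 / n`, a single active agent suffices: the active set never
dies out, whatever the sign of `lam`, and the convergence of the thresholds to their mean
activates everybody. -/
lemma tendsto_one_of_mean_lt (n : ℕ) [NeZero n] (hn : 2 ≤ n) (τ lam : ℝ) (hτ0 : 0 < τ)
    (hlam : |lam| < 1) (θ a : ℕ → Fin n → ℝ)
    (ha0 : ∀ i : Fin n, a 0 i = if i = 0 then 1 else 0)
    (ha : ∀ (t : ℕ) (i : Fin n),
      a (t + 1) i = if θ (t + 1) i ≤ (∑ j, a t j) / n then 1 else 0)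
    (hform : ∀ t i, θ t i = ((n : ℝ) - 1) * τ / n + dev n τ i * lam ^ t)
    (hle : ∀ t i, θ t i ≤ 1) (hm : ((n : ℝ) - 1) * τ < 1) :
    Filter.Tendsto a Filter.atTop (nhds (fun _ : Fin n => (1 : ℝ))) := by
  have hn' : (2 : ℝ) ≤ n := by exact_mod_cast hn
  have hn0 : (0 : ℝ) < n := by linarith
  have hmn : ((n : ℝ) - 1) * τ / n < 1 / n := div_lt_div_of_pos_right hm hn0
  have hm0 : 0 ≤ ((n : ℝ) - 1) * τ / n := by
    have : 0 ≤ (n : ℝ) - 1 := by linarith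
    positivity
  have hnn := activity_nonneg n θ a ha0 ha
  -- `dev` takes both signs, so for either sign of `lam ^ t` some threshold is at most the mean.
  have hmin : ∀ t, ∃ i, θ t i ≤ ((n : ℝ) - 1) * τ / n := by
    intro t
    rcases le_total 0 (lam ^ t) with h | h
    · refine ⟨0, ?_⟩
      rw [hform, dev, if_pos rfl]
      nlinarith
    · refine ⟨⟨1, hn⟩, ?_⟩
      have hne : (⟨1, hn⟩ : Fin n) ≠ 0 := by
        intro h
        simpa using congrArg Fin.val h
      rw [hform, dev, if_neg hne]
      have : 0 ≤ τ / n := by positivity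
      nlinarith
  have hS : ∀ t, 1 ≤ ∑ j, a t j := by
    intro t
    induction t with
    | zero => exact one_le_sum n _ (hnn 0) 0 (by simp [ha0])
    | succ t ih =>
      obtain ⟨i, hi⟩ := hmin (t + 1)
      refine one_le_sum n _ (hnn _) i ?_
      rw [ha, if_pos]
      have : 1 / (n : ℝ) ≤ (∑ j, a t j) / n := div_le_div_of_nonneg_right ih hn0.le
      linarith
  have hpow : Filter.Tendsto (fun t : ℕ => lam ^ t) Filter.atTop (nhds 0) :=
    tendsto_pow_atTop_nhds_zero_of_abs_lt_one hlam
  have hev : ∀ᶠ t in Filter.atTop, ∀ i, θ t i < 1 / n := by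
    rw [Filter.eventually_all]
    intro i
    have : Filter.Tendsto (fun t => θ t i) Filter.atTop (nhds (((n : ℝ) - 1) * τ / n)) := by
      simp only [hform]
      simpa using (hpow.const_mul (dev n τ i)).const_add (((n : ℝ) - 1) * τ / n)
    exact this.eventually_lt_const hmn
  obtain ⟨T, hT⟩ := Filter.eventually_atTop.mp hev
  refine tendsto_one_of_eq n θ a ha hle (T + 1) fun i => ?_
  rw [ha, if_pos]
  have : 1 / (n : ℝ) ≤ (∑ j, a T j) / n := div_le_div_of_nonneg_right (hS T) hn0.le
  have := hT (T + 1) (by omega) i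
  linarith

lemma sum_ge_of_others (n : ℕ) [NeZero n] (x : Fin n → ℝ) (hx0 : 0 ≤ x 0)
    (hx : ∀ i, i ≠ 0 → x i = 1) : (n : ℝ) - 1 ≤ ∑ j, x j := by
  have h : ∀ j, x j = 1 + if j = 0 then x 0 - 1 else 0 := by
    intro j
    split_ifs with hj
    · rw [hj]
      ring
    · rw [hx j hj]
      ring
  have : ∑ j, x j = n + (x 0 - 1) := by
    rw [Finset.sum_congr rfl fun j _ => h j]
    simp [Finset.sum_add_distrib]
  linarith


/-- Complete graph, UAL setting: asymptotic activity patterns. -/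
theorem complete_graph_UAL_asymptotics
    (n : ℕ) [NeZero n] (hn : 2 ≤ n) (β τ : ℝ) (hβ : 0 < β)
    (hτ0 : 0 < τ) (hτ1 : τ < 1)
    (F G : Matrix (Fin n) (Fin n) ℝ)
    (hF : ∀ i j : Fin n, F i j = if i = j then β / (β + n - 1) else 1 / (β + n - 1))
    (hG : ∀ i j : Fin n, G i j = 1 / n)
    (θ a : ℕ → Fin n → ℝ)
    (hθ0 : ∀ i : Fin n, θ 0 i = if i = 0 then 0 else τ)
    (ha0 : ∀ i : Fin n, a 0 i = if i = 0 then 1 else 0)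
    (hθ : ∀ t : ℕ, θ (t + 1) = F.mulVec (θ t))
    (ha : ∀ (t : ℕ) (i : Fin n),
      a (t + 1) i = if θ (t + 1) i ≤ G.mulVec (a t) i then 1 else 0) :
    (1 < β →
      (τ < 1 / ((n : ℝ) - 1) →
        Filter.Tendsto a Filter.atTop (nhds (fun _ : Fin n => (1 : ℝ)))) ∧
      (τ > 1 / ((n : ℝ) - 1) →
        Filter.Tendsto a Filter.atTop (nhds (fun _ : Fin n => (0 : ℝ)))) ∧
      (τ = 1 / ((n : ℝ) - 1) → ∀ t : ℕ, 1 ≤ t → a t = a 0)) ∧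
    (β ≤ 1 →
      (τ ≤ (β + n - 1) / ((n : ℝ) * (β + n - 2)) →
        Filter.Tendsto a Filter.atTop (nhds (fun _ : Fin n => (1 : ℝ)))) ∧
      (τ > (β + n - 1) / ((n : ℝ) * (β + n - 2)) →
        Filter.Tendsto a Filter.atTop (nhds (fun _ : Fin n => (0 : ℝ))))) := by
  have hn' : (2 : ℝ) ≤ n := by exact_mod_cast hn
  have hn0 : (0 : ℝ) < n := by linarith
  have hn1 : (0 : ℝ) < (n : ℝ) - 1 := by linarith
  have hD : 0 < β + n - 1 := by linarith
  have hE : 0 < β + n - 2 := by linarith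
  have hform := threshold_formula n hn β τ hβ F hF θ hθ0 hθ
  have hleτ := threshold_le n hn β τ hβ hτ0 F hF θ hθ0 hθ
  have hle : ∀ t i, θ t i ≤ 1 := fun t i => (hleτ t i).trans hτ1.le
  have hlam := abs_lam_lt_one n hn β hβ
  have hlamdef : (β - 1) / (β + n - 1) * (β + n - 1) = β - 1 := div_mul_cancel₀ _ hD.ne'
  have hlam1 : 1 < β → 0 < (β - 1) / (β + n - 1) := fun h => div_pos (by linarith) hD
  have hlam2 : β ≤ 1 → (β - 1) / (β + n - 1) ≤ 0 := fun h =>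
    div_nonpos_of_nonpos_of_nonneg (by linarith) hD.le
  -- The threshold of the other agents at time `1` is `τ (β + n - 2) / (β + n - 1)`.
  have hother : ((n : ℝ) - 1) * τ / n + τ / n * ((β - 1) / (β + n - 1))
      = τ * (β + n - 2) / (β + n - 1) := by
    field_simp
    ring
  set lam := (β - 1) / (β + n - 1) with hlam_def
  have hpos : ∀ t i, 0 < θ (t + 1) i := fun t i => by
    rw [hform]
    exact threshold_pos n hn τ lam hτ0 hlam t i
  have ha' : ∀ (t : ℕ) (i : Fin n),
      a (t + 1) i = if θ (t + 1) i ≤ (∑ j, a t j) / n then 1 else 0 := by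
    intro t i
    have : G.mulVec (a t) i = (∑ j, a t j) / n := by
      simp only [Matrix.mulVec, dotProduct, hG, ← Finset.mul_sum]
      ring
    rw [ha, this]
  have hnn := activity_nonneg n θ a ha0 ha'
  have hS0 : ∑ j, a 0 j = 1 := by simp [ha0]
  have hq : 0 < τ / n := by positivity
  have hm0 : 0 < ((n : ℝ) - 1) * τ / n := by positivity
  have hθz : ∀ t, θ t 0 = ((n : ℝ) - 1) * τ / n - ((n : ℝ) - 1) * τ / n * lam ^ t := by
    intro t
    rw [hform, dev, if_pos rfl]
    ring
  have hθo : ∀ t i, i ≠ 0 → θ t i = ((n : ℝ) - 1) * τ / n + τ / n * lam ^ t := by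
    intro t i hi
    rw [hform, dev, if_neg hi]
  refine ⟨fun hβ1 => ⟨fun h => ?_, fun h => ?_, fun h => ?_⟩, fun hβ1 => ⟨fun h => ?_, fun h => ?_⟩⟩
  · rw [lt_div_iff₀ hn1] at h
    exact tendsto_one_of_mean_lt n hn τ lam hτ0 hlam θ a ha0 ha' hform hle (by linarith)
  · rw [gt_iff_lt, div_lt_iff₀ hn1] at h
    have hmn : 1 / (n : ℝ) < ((n : ℝ) - 1) * τ / n := div_lt_div_of_pos_right (by linarith) hn0
    -- The agents other than `0` are never active, so the fraction never exceeds `1 / n`.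
    have hoff : ∀ t, (∀ i, i ≠ 0 → a t i = 0) ∧ a t 0 ≤ 1 := by
      intro t
      induction t with
      | zero => exact ⟨fun i hi => by rw [ha0, if_neg hi], by simp [ha0]⟩
      | succ t ih =>
        refine ⟨fun i hi => ?_, ?_⟩
        · rw [ha', if_neg]
          have hs : (∑ j, a t j) / n ≤ 1 / n := by
            rw [Finset.sum_eq_single 0 (fun j _ hj => ih.1 j hj) (by simp)]
            exact div_le_div_of_nonneg_right ih.2 hn0.le
          rw [hθo _ i hi]
          have : 0 < τ / n * lam ^ (t + 1) := mul_pos hq (pow_pos (hlam1 hβ1) _)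
          linarith
        · rw [ha']
          split_ifs <;> norm_num
    have hev : ∀ᶠ t in Filter.atTop, 1 / (n : ℝ) < θ t 0 := by
      have hpow : Filter.Tendsto (fun t : ℕ => lam ^ t) Filter.atTop (nhds 0) :=
        tendsto_pow_atTop_nhds_zero_of_abs_lt_one hlam
      have : Filter.Tendsto (fun t => θ t 0) Filter.atTop (nhds (((n : ℝ) - 1) * τ / n)) := by
        simp only [hθz]
        simpa using (hpow.const_mul (((n : ℝ) - 1) * τ / n)).const_sub (((n : ℝ) - 1) * τ / n)
      exact this.eventually_const_lt hmn
    obtain ⟨T, hT⟩ := Filter.eventually_atTop.mp hev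
    refine tendsto_zero_of_eq n θ a ha' hpos (T + 1) fun i => ?_
    by_cases hi : i = 0
    · subst hi
      rw [ha', if_neg]
      have hs : (∑ j, a T j) / n ≤ 1 / n := by
        rw [Finset.sum_eq_single 0 (fun j _ hj => (hoff T).1 j hj) (by simp)]
        exact div_le_div_of_nonneg_right (hoff T).2 hn0.le
      have := hT (T + 1) (by omega)
      linarith
    · exact (hoff (T + 1)).1 i hi
  · have hmn : ((n : ℝ) - 1) * τ / n = 1 / n := by
      rw [h]
      field_simp
    intro t _
    induction t with
    | zero => rfl
    | succ t ih =>
      have hat : a t = a 0 := by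
        cases t with
        | zero => rfl
        | succ t => exact ih (by omega)
      have hL : 0 < lam ^ (t + 1) := pow_pos (hlam1 hβ1) _
      funext i
      rw [ha', hat, hS0, ha0]
      by_cases hi : i = 0
      · subst hi
        have : 0 < ((n : ℝ) - 1) * τ / n * lam ^ (t + 1) := mul_pos hm0 hL
        rw [if_pos rfl, if_pos]
        rw [hθz]
        linarith
      · have : 0 < τ / n * lam ^ (t + 1) := mul_pos hq hL
        rw [if_neg hi, if_neg]
        rw [hθo _ i hi]
        linarith
  · rw [le_div_iff₀ (by positivity)] at h
    rcases hn.eq_or_lt with h2 | h3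
    · have h2' : (n : ℝ) = 2 := by exact_mod_cast h2.symm
      refine tendsto_one_of_mean_lt n hn τ lam hτ0 hlam θ a ha0 ha' hform hle ?_
      rw [h2']
      linarith
    · have h3' : (3 : ℝ) ≤ n := by exact_mod_cast h3
      have h1 : ∀ i, i ≠ 0 → a 1 i = 1 := by
        intro i hi
        rw [ha', if_pos]
        rw [hθo _ i hi, hS0, zero_add, pow_one, hother, div_le_div_iff₀ hD hn0]
        linarith
      have hS1 := sum_ge_of_others n (a 1) (hnn 1 0) h1
      -- Here `n ≥ 3` matters: `η(β) ≤ (n - 1) / n` because `β + n - 1 ≤ (n - 1) (β + n - 2)`.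
      have hτn : τ * n ≤ (n : ℝ) - 1 := by
        have : (τ * n) * (β + n - 2) ≤ ((n : ℝ) - 1) * (β + n - 2) := by nlinarith
        exact le_of_mul_le_mul_right this hE
      refine tendsto_one_of_eq n θ a ha' hle 2 fun i => ?_
      rw [ha', if_pos]
      refine (hleτ _ i).trans ?_
      rw [le_div_iff₀ hn0]
      linarith
  · rw [gt_iff_lt, div_lt_iff₀ (by positivity)] at h
    have hbig : 1 / (n : ℝ) < ((n : ℝ) - 1) * τ / n + τ / n * lam := by
      rw [hother, div_lt_div_iff₀ hn0 hD]
      linarith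
    have hl := hlam2 hβ1
    refine tendsto_zero_of_eq n θ a ha' hpos 1 fun i => ?_
    rw [ha', if_neg]
    rw [hS0, not_le, zero_add]
    by_cases hi : i = 0
    · subst hi
      rw [hθz, pow_one]
      nlinarith
    · rw [hθo _ i hi, pow_one]
      exact hbig
end

section
/- Consider the threshold model on n agents with complete graph in the UAL setting (F = (β/(β+n−1)) I_n + (1/(β+n−1)) (𝟙𝟙ᵀ − I_n), G = 𝟙𝟙ᵀ/n), initial condition θ(0) = (0, τ, …, τ)ᵀ, 0 < τ < 1, and a(0) = (1, 0, …, 0)ᵀ. Let η(β) = (β+n−1)/(n(β+n−2)). Then a(t) = 𝟙 for all t ≥ 1 if and only if τ ≤ min{(β+n−1)/(n(n−1)), η(β)}, and a(t) = 0 for all t ≥ 1 if and only if τ > max{(β+n−1)/(n(n−1)), η(β)}. -/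
/-!
`F` is a row-stochastic matrix with positive entries. Hence the thresholds stay at most `1`, and
they are positive from time `1` on. As every entry of `G *ᵥ v` is the mean of `v`, the all-ones
state (mean `1`) and the all-zeros state (mean `0`) are absorbing from time `1` on, so both
equivalences only concern `a 1`. At time `1` every agent sees the mean `1 / n`, which is compared
with the threshold `(n - 1) τ / (β + n - 1)` of agent `0` and with the threshold
`(β + n - 2) τ / (β + n - 1)` of all the others; solving for `τ` gives the two bounds.
-/

/-- Multiplication by a matrix with constant diagonal and constant off-diagonal entries acts
through the total sum of the vector. -/
lemma UAL_mulVec {n : ℕ} {β : ℝ} {F : Matrix (Fin n) (Fin n) ℝ}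
    (hF : ∀ i j : Fin n, F i j = if i = j then β / (β + n - 1) else 1 / (β + n - 1))
    (v : Fin n → ℝ) (i : Fin n) :
    F.mulVec v i = ((β - 1) * v i + ∑ j, v j) / (β + n - 1) := by
  have h : ∀ j, F i j * v j
      = (if i = j then (β - 1) * v j / (β + n - 1) else 0) + v j / (β + n - 1) := by
    intro j
    rw [hF]
    split_ifs <;> ring
  simp only [Matrix.mulVec, dotProduct, h, Finset.sum_add_distrib, Finset.sum_ite_eq,
    Finset.mem_univ, if_true, ← Finset.sum_div]
  ring

/-- Complete graph, UAL setting: one-step asymptotic behavior. -/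
theorem complete_graph_UAL_one_step
    (n : ℕ) [NeZero n] (hn : 2 ≤ n) (β τ : ℝ) (hβ : 0 < β)
    (hτ0 : 0 < τ) (hτ1 : τ < 1)
    (F G : Matrix (Fin n) (Fin n) ℝ)
    (hF : ∀ i j : Fin n, F i j = if i = j then β / (β + n - 1) else 1 / (β + n - 1))
    (hG : ∀ i j : Fin n, G i j = 1 / n)
    (θ a : ℕ → Fin n → ℝ)
    (hθ0 : ∀ i : Fin n, θ 0 i = if i = 0 then 0 else τ)
    (ha0 : ∀ i : Fin n, a 0 i = if i = 0 then 1 else 0)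
    (hθ : ∀ t : ℕ, θ (t + 1) = F.mulVec (θ t))
    (ha : ∀ (t : ℕ) (i : Fin n),
      a (t + 1) i = if θ (t + 1) i ≤ G.mulVec (a t) i then 1 else 0) :
    ((∀ t : ℕ, 1 ≤ t → a t = fun _ : Fin n => (1 : ℝ)) ↔
      τ ≤ min ((β + n - 1) / ((n : ℝ) * (n - 1))) ((β + n - 1) / ((n : ℝ) * (β + n - 2)))) ∧
    ((∀ t : ℕ, 1 ≤ t → a t = fun _ : Fin n => (0 : ℝ)) ↔
      τ > max ((β + n - 1) / ((n : ℝ) * (n - 1))) ((β + n - 1) / ((n : ℝ) * (β + n - 2)))) := by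
  have hn' : (2 : ℝ) ≤ n := by exact_mod_cast hn
  have hn0 : (0 : ℝ) < n := by linarith
  have hD : 0 < β + n - 1 := by linarith
  have hE : 0 < β + n - 2 := by linarith
  have hFpos : ∀ i j, 0 < F i j := by
    intro i j
    rw [hF]
    split_ifs <;> positivity
  have hGv : ∀ (v : Fin n → ℝ) i, G.mulVec v i = (∑ j, v j) / n := by
    intro v i
    simp only [Matrix.mulVec, dotProduct, hG, ← Finset.mul_sum]
    ring
  have hle : ∀ t i, θ t i ≤ 1 := by
    intro t
    induction t with
    | zero => intro i; rw [hθ0]; split_ifs <;> linarith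
    | succ t ih =>
      intro i
      rw [hθ]
      calc F.mulVec (θ t) i ≤ F.mulVec (fun _ => 1) i := by
            simp only [Matrix.mulVec, dotProduct]
            exact Finset.sum_le_sum fun j _ => mul_le_mul_of_nonneg_left (ih j) (hFpos i j).le
        _ = 1 := by
            rw [UAL_mulVec hF, div_eq_one_iff_eq hD.ne']
            simp
            ring
  have hsum : ∑ j, θ 0 j = (n - 1) * τ := by
    have h : ∀ j, θ 0 j = τ - (if j = 0 then τ else 0) := by
      intro j
      rw [hθ0]
      split_ifs <;> ring
    simp only [h, Finset.sum_sub_distrib, Finset.sum_ite_eq', Finset.mem_univ, if_true]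
    simp
    ring
  have hθ1 : ∀ i, θ 1 i
      = if i = 0 then (n - 1) * τ / (β + n - 1) else (β + n - 2) * τ / (β + n - 1) := by
    intro i
    rw [hθ 0, UAL_mulVec hF, hsum, hθ0]
    split_ifs <;> ring
  have hpos : ∀ t i, 0 < θ (t + 1) i := by
    intro t
    induction t with
    | zero =>
      intro i
      have : (0 : ℝ) < n - 1 := by linarith
      rw [hθ1]
      split_ifs <;> positivity
    | succ t ih =>
      intro i
      rw [hθ]
      exact Finset.sum_pos (fun j _ => mul_pos (hFpos i j) (ih j)) ⟨0, Finset.mem_univ _⟩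
  have hp0 : ∀ i, G.mulVec (a 0) i = 1 / n := by
    intro i
    rw [hGv]
    simp [ha0]
  have ha1 : ∀ i, a 1 i = if θ 1 i ≤ 1 / n then 1 else 0 := by
    intro i
    rw [ha 0, hp0]
  let k : Fin n := ⟨1, hn⟩
  have hk : k ≠ 0 := by
    intro h
    have := congrArg Fin.val h
    simp [k] at this
  have key0 : (n - 1) * τ / (β + n - 1) ≤ 1 / n ↔ τ ≤ (β + n - 1) / ((n : ℝ) * (n - 1)) := by
    rw [div_le_div_iff₀ hD hn0, le_div_iff₀ (mul_pos hn0 (by linarith))]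
    constructor <;> intro h <;> linarith
  have key1 : (β + n - 2) * τ / (β + n - 1) ≤ 1 / n
      ↔ τ ≤ (β + n - 1) / ((n : ℝ) * (β + n - 2)) := by
    rw [div_le_div_iff₀ hD hn0, le_div_iff₀ (mul_pos hn0 hE)]
    constructor <;> intro h <;> linarith
  have h10 : θ 1 0 = (n - 1) * τ / (β + n - 1) := by rw [hθ1, if_pos rfl]
  have h1k : ∀ i, i ≠ 0 → θ 1 i = (β + n - 2) * τ / (β + n - 1) := by
    intro i hi
    rw [hθ1, if_neg hi]
  refine ⟨⟨fun h => ?_, fun h => ?_⟩, ⟨fun h => ?_, fun h => ?_⟩⟩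
  · have hall : ∀ i, θ 1 i ≤ 1 / n := by
      intro i
      by_contra hc
      have := ha1 i
      rw [h 1 le_rfl, if_neg hc] at this
      exact one_ne_zero this
    exact le_min (key0.1 (h10 ▸ hall 0)) (key1.1 (h1k k hk ▸ hall k))
  · intro t ht
    induction t, ht using Nat.le_induction with
    | base =>
      funext i
      rw [ha1, if_pos]
      by_cases hi : i = 0
      · rw [hi, h10]
        exact key0.2 (h.trans (min_le_left _ _))
      · rw [h1k i hi]
        exact key1.2 (h.trans (min_le_right _ _))
    | succ t _ ih =>
      funext i
      rw [ha, if_pos]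
      rw [hGv, ih]
      simpa [hn0.ne'] using hle (t + 1) i
  · have hall : ∀ i, ¬ θ 1 i ≤ 1 / n := by
      intro i hc
      have := ha1 i
      rw [h 1 le_rfl, if_pos hc] at this
      exact zero_ne_one this
    refine max_lt (not_le.1 fun hc => hall 0 ?_) (not_le.1 fun hc => hall k ?_)
    · rw [h10]
      exact key0.2 hc
    · rw [h1k k hk]
      exact key1.2 hc
  · intro t ht
    induction t, ht using Nat.le_induction with
    | base =>
      funext i
      rw [ha1, if_neg]
      by_cases hi : i = 0
      · rw [hi, h10, key0]
        exact not_le.2 ((le_max_left _ _).trans_lt h)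
      · rw [h1k i hi, key1]
        exact not_le.2 ((le_max_right _ _).trans_lt h)
    | succ t _ ih =>
      funext i
      rw [ha, if_neg]
      rw [hGv, ih]
      simpa using hpos t i
end

section
/- Consider the threshold dynamics θ(t+1) = F θ(t) on n agents with star graph centered at agent 1, where F has first row (β/(β+n−1), 1/(β+n−1), …, 1/(β+n−1)) and, for i = 2,…,n, row i has entry 1/(β+1) in column 1, β/(β+1) in column i, and 0 elsewhere, with β > 0. If θ(0) = (0, τ, …, τ)ᵀ with 0 < τ < 1, then for all t ≥ 0: θ_1(t) = (r/(1+r)) τ (1 − λ_s^t) and θ_i(t) = (r/(1+r)) τ (1 + λ_s^t/r) for i = 2, …, n, where r = (n−1)(β+1)/(β+n−1) and λ_s = β(2β+n)/((β+1)(β+n−1)) − 1. -/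
/-!
By symmetry all leaves carry the same value, so the dynamics reduces to the 2 × 2 system
`x' = (β x + (n - 1) y) / (β + n - 1)`, `y' = (x + β y) / (β + 1)` for the center value `x` and the
common leaf value `y`. Its matrix is stochastic, so its eigenvalues are `1`, with eigenvector
`(1, 1)`, and `lam` (the trace minus one), with eigenvector `(-1, 1 / r)`. The initial condition
`(0, τ)` is `r / (1 + r) * τ` times the sum of these two eigenvectors. The two coordinates of the
eigenvector equation for `lam` are `lam = β / (β + n - 1) - 1 / (β + 1)` and
`lam = (β - r) / (β + 1)`, and the formula follows by induction on `t`.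
-/

/-- A sum over `Fin n` of a function that is constant off `0`. -/
lemma sum_eq_of_const_off_zero (n : ℕ) [NeZero n] (f : Fin n → ℝ) (c : ℝ)
    (h : ∀ i, i ≠ 0 → f i = c) : ∑ i, f i = f 0 + ((n : ℝ) - 1) * c := by
  have hn : 1 ≤ n := NeZero.one_le
  rw [← Finset.add_sum_erase _ _ (Finset.mem_univ (0 : Fin n)),
    Finset.sum_congr rfl (fun i hi => h i (Finset.ne_of_mem_erase hi)), Finset.sum_const,
    Finset.card_erase_of_mem (Finset.mem_univ _), Finset.card_univ, Fintype.card_fin,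
    nsmul_eq_mul, Nat.cast_sub hn, Nat.cast_one]


/-- Star-graph threshold dynamics: explicit formula for θ(t). -/
theorem star_graph_threshold_formula
    (n : ℕ) [NeZero n] (hn : 2 ≤ n) (β τ : ℝ) (hβ : 0 < β)
    (hτ0 : 0 < τ) (hτ1 : τ < 1)
    (F : Matrix (Fin n) (Fin n) ℝ)
    (hF : ∀ i j : Fin n, F i j =
      if i = 0 then (if j = 0 then β / (β + n - 1) else 1 / (β + n - 1))
      else (if j = 0 then 1 / (β + 1) else if j = i then β / (β + 1) else 0))
    (θ : ℕ → Fin n → ℝ)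
    (hθ0 : ∀ i : Fin n, θ 0 i = if i = 0 then 0 else τ)
    (hθ : ∀ t : ℕ, θ (t + 1) = F.mulVec (θ t))
    (r lam : ℝ)
    (hr : r = ((n : ℝ) - 1) * (β + 1) / (β + n - 1))
    (hlam : lam = β * (2 * β + n) / ((β + 1) * (β + n - 1)) - 1) :
    ∀ t : ℕ,
      θ t 0 = r / (1 + r) * τ * (1 - lam ^ t) ∧
      ∀ i : Fin n, i ≠ 0 → θ t i = r / (1 + r) * τ * (1 + lam ^ t / r) := by
  have hn' : (2 : ℝ) ≤ n := by exact_mod_cast hn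
  have hm : 0 < (n : ℝ) - 1 := by linarith
  have hD : 0 < β + (n : ℝ) - 1 := by linarith
  have hb : 0 < β + 1 := by linarith
  have hr0 : 0 < r := by rw [hr]; positivity
  have hr1 : 1 + r ≠ 0 := by positivity
  have hrD : r * (β + n - 1) = ((n : ℝ) - 1) * (β + 1) := by
    rw [hr]; field_simp
  have hl1 : lam = β / (β + n - 1) - 1 / (β + 1) := by
    rw [hlam]; field_simp; ring
  have hl2 : lam = (β - r) / (β + 1) := by
    rw [hlam, hr]; field_simp; ring
  have hmr : ((n : ℝ) - 1) / r = (β + n - 1) / (β + 1) := by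
    rw [div_eq_div_iff hr0.ne' hb.ne']; linarith
  intro t
  induction t with
  | zero =>
    refine ⟨by simp [hθ0], fun i hi => ?_⟩
    rw [hθ0, if_neg hi, pow_zero]
    field_simp
    ring
  | succ t ih =>
    obtain ⟨h0, h1⟩ := ih
    set c := r / (1 + r) * τ with hc
    set p := lam ^ t with hp
    rw [hθ, pow_succ, ← hp]
    refine ⟨?_, fun i hi => ?_⟩
    · have hx : F.mulVec (θ t) 0 = β / (β + n - 1) * (c * (1 - p))
          + ((n : ℝ) - 1) * (1 / (β + n - 1) * (c * (1 + p / r))) := by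
        rw [Matrix.mulVec, dotProduct, sum_eq_of_const_off_zero n _
          (1 / (β + n - 1) * (c * (1 + p / r))) (fun j hj => by simp [hF, hj, h1 j hj])]
        simp [hF, h0]
      have hy : ((n : ℝ) - 1) * (1 / (β + n - 1) * (c * (1 + p / r)))
          = c * (((n : ℝ) - 1) + p * (((n : ℝ) - 1) / r)) / (β + n - 1) := by
        ring
      rw [hx, hy, hmr, hl1]
      field_simp
      ring
    · have hx : F.mulVec (θ t) i = 1 / (β + 1) * (c * (1 - p))
          + β / (β + 1) * (c * (1 + p / r)) := by
        rw [Matrix.mulVec, dotProduct, Fintype.sum_eq_add 0 i (Ne.symm hi)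
          (fun j hj => by simp [hF, hi, hj.1, hj.2])]
        simp [hF, hi, h0, h1 i hi]
      rw [hx, hl2]
      field_simp
      ring
end

section
/- Consider the threshold dynamics θ(t+1) = F θ(t) on n agents with the star-graph matrix F (first row (β/(β+n−1), 1/(β+n−1), …, 1/(β+n−1)); row i ≥ 2 has 1/(β+1) in column 1 and β/(β+1) in column i), β > 0, and θ(0) = (0, τ, …, τ)ᵀ with 0 < τ < 1. Then lim_{t→∞} θ(t) = (r/(1+r)) τ 𝟙 with r = (n−1)(β+1)/(β+n−1). Moreover, if β > √(n−1), then λ_s = β(2β+n)/((β+1)(β+n−1)) − 1 > 0, and θ_1(t+1) > θ_1(t) and θ_i(t+1) < θ_i(t) for all i = 2, …, n and all t ≥ 0. -/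
/-!
By symmetry every leaf carries the same value `b`, so the dynamics reduces to the pair `(a, b)` of
centre and leaf values. With `p = (n - 1) / (β + n - 1)` and `q = 1 / (β + 1)` it reads
`a' = (1 - p) a + p b`, `b' = q a + (1 - q) b`. The gap `b - a` is therefore multiplied by
`lam = 1 - p - q` at each step, and with `L = p τ / (p + q)` one gets the closed form
`a = L - L lam ^ t`, `b = L + (τ - L) lam ^ t`. As `p, q ∈ (0, 1)`, we have `|lam| < 1`, which gives
the limit `L`; and `0 < L < τ`, so both sequences are strictly monotone as soon as `lam > 0`,
which amounts to `β ^ 2 > n - 1`.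
-/


/-- Star-graph threshold dynamics: limit and monotonicity. -/
theorem star_graph_threshold_limit_and_monotonicity
    (n : ℕ) [NeZero n] (hn : 2 ≤ n) (β τ : ℝ) (hβ : 0 < β)
    (hτ0 : 0 < τ) (hτ1 : τ < 1)
    (F : Matrix (Fin n) (Fin n) ℝ)
    (hF : ∀ i j : Fin n, F i j =
      if i = 0 then (if j = 0 then β / (β + n - 1) else 1 / (β + n - 1))
      else (if j = 0 then 1 / (β + 1) else if j = i then β / (β + 1) else 0))
    (θ : ℕ → Fin n → ℝ)
    (hθ0 : ∀ i : Fin n, θ 0 i = if i = 0 then 0 else τ)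
    (hθ : ∀ t : ℕ, θ (t + 1) = F.mulVec (θ t))
    (r lam : ℝ)
    (hr : r = ((n : ℝ) - 1) * (β + 1) / (β + n - 1))
    (hlam : lam = β * (2 * β + n) / ((β + 1) * (β + n - 1)) - 1) :
    Filter.Tendsto θ Filter.atTop (nhds (fun _ : Fin n => r / (1 + r) * τ)) ∧
    (β > Real.sqrt ((n : ℝ) - 1) →
      0 < lam ∧
      ∀ t : ℕ, θ t 0 < θ (t + 1) 0 ∧ ∀ i : Fin n, i ≠ 0 → θ (t + 1) i < θ t i) := by
  obtain ⟨m, rfl⟩ : ∃ m, n = m + 1 := ⟨n - 1, by omega⟩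
  have hm : (1 : ℝ) ≤ m := by exact_mod_cast (by omega : 1 ≤ m)
  have e : β + ((m + 1 : ℕ) : ℝ) - 1 = β + m := by push_cast; ring
  have e' : ((m + 1 : ℕ) : ℝ) - 1 = m := by push_cast; ring
  rw [e'] at hr ⊢
  rw [e] at hr hlam
  simp only [e] at hF
  obtain ⟨p, hp⟩ : ∃ p, p = (m : ℝ) / (β + m) := ⟨_, rfl⟩
  obtain ⟨q, hq⟩ : ∃ q, q = 1 / (β + 1) := ⟨_, rfl⟩
  obtain ⟨L, hL⟩ : ∃ L, L = r / (1 + r) * τ := ⟨_, rfl⟩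
  have hp0 : 0 < p := by rw [hp]; positivity
  have hq0 : 0 < q := by rw [hq]; positivity
  have hp1 : p < 1 := by rw [hp, div_lt_one (by positivity)]; linarith
  have hq1 : q < 1 := by rw [hq, div_lt_one (by positivity)]; linarith
  have hlam' : lam = 1 - p - q := by
    rw [hlam, hp, hq]; push_cast; field_simp; ring
  have hr' : r = p / q := by rw [hr, hp, hq]; field_simp
  have hLp : L * (p + q) = p * τ := by
    rw [hL, hr']; field_simp; ring
  have hL0 : 0 < L := by
    rw [hL, hr']; positivity
  have hLτ : L < τ := by nlinarith [mul_pos hq0 hτ0]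
  have closed : ∀ t i, θ t i = if i = 0 then L - L * lam ^ t else L + (τ - L) * lam ^ t := by
    intro t
    induction t with
    | zero => intro i; rw [hθ0]; split_ifs <;> simp
    | succ t ih =>
      intro i
      rw [hθ, Matrix.mulVec, dotProduct, Fin.sum_univ_succ]
      simp only [hF, ih, Fin.succ_ne_zero, if_true, if_false]
      have h1 : β / (β + m) = 1 - p := by rw [hp]; field_simp; ring
      have h2 : β / (β + 1) = 1 - q := by rw [hq]; field_simp; ring
      have h3 : (m : ℝ) * (1 / (β + m)) = p := by rw [hp]; ring
      split_ifs with hi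
      · rw [Finset.sum_const, Finset.card_univ, Fintype.card_fin, nsmul_eq_mul, ← mul_assoc, h3, h1,
          pow_succ, hlam']
        linear_combination (-(1 - p - q) ^ t) * hLp
      · obtain ⟨k, rfl⟩ := Fin.exists_succ_eq.2 hi
        simp only [Fin.succ_inj, ite_mul, zero_mul, Finset.sum_ite_eq', Finset.mem_univ, if_true]
        rw [← hq, h2, pow_succ, hlam']
        linear_combination (-(1 - p - q) ^ t) * hLp
  refine ⟨?_, fun hβn => ?_⟩
  · rw [← hL, tendsto_pi_nhds]
    intro i
    have hpow : Filter.Tendsto (fun t : ℕ => lam ^ t) Filter.atTop (nhds 0) :=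
      tendsto_pow_atTop_nhds_zero_of_abs_lt_one (by rw [abs_lt]; constructor <;> linarith)
    simp only [closed]
    split_ifs
    · simpa using (hpow.const_mul L).const_sub L
    · simpa using (hpow.const_mul (τ - L)).const_add L
  · have hsq : (m : ℝ) < β ^ 2 := (Real.sqrt_lt' hβ).1 hβn
    have hlam0 : 0 < lam := by
      have : lam = (β ^ 2 - m) / ((β + 1) * (β + m)) := by
        rw [hlam]; push_cast; field_simp; ring
      rw [this]
      exact div_pos (by linarith) (by positivity)
    refine ⟨hlam0, fun t => ?_⟩
    have hstep : lam ^ (t + 1) < lam ^ t :=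
      pow_lt_pow_right_of_lt_one₀ hlam0 (by linarith) (Nat.lt_succ_self t)
    refine ⟨?_, fun i hi => ?_⟩
    · rw [closed, closed, if_pos rfl, if_pos rfl]
      linarith [mul_lt_mul_of_pos_left hstep hL0]
    · rw [closed, closed, if_neg hi, if_neg hi]
      linarith [mul_lt_mul_of_pos_left hstep (sub_pos.2 hLτ)]
end

section
/- Consider the threshold model on n agents with star graph centered at agent 1 in the WAL setting (G = F the star-graph matrix), initial condition θ(0) = (0, τ, …, τ)ᵀ, 0 < τ < 1, a(0) = (1, 0, …, 0)ᵀ. Then a(t) = 𝟙 for all t ≥ 1 if and only if τ ≤ min{1/β, β/(n−1)}, and a(t) = 0 for all t ≥ 1 if and only if τ > max{1/β, β/(n−1)}. -/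
/-!
Every vector that occurs in the dynamics is constant on the leaves, so the state is determined by
a pair (centre value, leaf value) and `F` acts on such pairs by an explicit two-dimensional rule
(`mulVec_star`). For `t = 1` this rule turns activity of the centre into `τ ≤ β / (n - 1)` and
activity of a leaf into `τ ≤ 1 / β`, which yields both necessary conditions and the base cases of
the sufficient ones.

The two conclusions persist because from time 1 on all thresholds lie in `(0, 1]`
(`theta_bounds`): the rows of `F` are convex weights, so `F 𝟙 = 𝟙` dominates the thresholds and
`F 0 = 0` is strictly below them.
-/

/-- Action of the star-graph matrix on a vector with value `x` at the centre and `y` on every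
leaf. -/
lemma mulVec_star
    (n : ℕ) [NeZero n] (hn : 2 ≤ n) (β : ℝ) (hβ : 0 < β)
    (F : Matrix (Fin n) (Fin n) ℝ)
    (hF : ∀ i j : Fin n, F i j =
      if i = 0 then (if j = 0 then β / (β + n - 1) else 1 / (β + n - 1))
      else (if j = 0 then 1 / (β + 1) else if j = i then β / (β + 1) else 0))
    (v : Fin n → ℝ) (x y : ℝ) (hv : ∀ i, v i = if i = 0 then x else y) (i : Fin n) :
    F.mulVec v i = if i = 0 then (β * x + ((n : ℝ) - 1) * y) / (β + n - 1)
      else (x + β * y) / (β + 1) := by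
  have hn' : (2 : ℝ) ≤ n := by exact_mod_cast hn
  have h1 : β + n - 1 ≠ 0 := by linarith
  have h2 : β + 1 ≠ 0 := by linarith
  simp only [Matrix.mulVec, dotProduct]
  by_cases hi : i = 0
  · have h : ∀ j, F i j * v j = y / (β + n - 1) +
        if j = 0 then (β * x - y) / (β + n - 1) else 0 := by
      intro j
      rw [hF, hv]
      by_cases hj : j = 0
      · simp only [hi, hj, if_true]; field_simp; ring
      · simp only [hi, hj, if_true, if_false]; field_simp; ring
    rw [Finset.sum_congr rfl (fun j _ => h j), Finset.sum_add_distrib]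
    simp only [Finset.sum_ite_eq', Finset.mem_univ, if_true, Finset.sum_const, Finset.card_univ,
      Fintype.card_fin, nsmul_eq_mul, hi]
    field_simp
    ring
  · have h : ∀ j, F i j * v j = (if j = 0 then x / (β + 1) else 0) +
        if j = i then β * y / (β + 1) else 0 := by
      intro j
      rw [hF, hv]
      by_cases hj : j = 0
      · have hji : (0 : Fin n) ≠ i := fun h => hi h.symm
        simp only [hi, hj, hji, if_true, if_false]; ring
      · by_cases hji : j = i
        · simp only [hji, hi, if_true, if_false]; ring
        · simp only [hi, hj, hji, if_false]; ring
    rw [Finset.sum_congr rfl (fun j _ => h j), Finset.sum_add_distrib]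
    simp only [Finset.sum_ite_eq', Finset.mem_univ, if_true, hi, if_false]
    ring

/-- From time 1 on, every threshold lies in `(0, 1]`. At time 0 the centre's threshold is `0`, so
positivity needs one averaging step. -/
lemma theta_bounds
    (n : ℕ) [NeZero n] (hn : 2 ≤ n) (β τ : ℝ) (hβ : 0 < β)
    (hτ0 : 0 < τ) (hτ1 : τ < 1)
    (F : Matrix (Fin n) (Fin n) ℝ)
    (hF : ∀ i j : Fin n, F i j =
      if i = 0 then (if j = 0 then β / (β + n - 1) else 1 / (β + n - 1))
      else (if j = 0 then 1 / (β + 1) else if j = i then β / (β + 1) else 0))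
    (θ : ℕ → Fin n → ℝ)
    (hθ0 : ∀ i : Fin n, θ 0 i = if i = 0 then 0 else τ)
    (hθ : ∀ t : ℕ, θ (t + 1) = F.mulVec (θ t)) (t : ℕ) (i : Fin n) :
    0 < θ (t + 1) i ∧ θ (t + 1) i ≤ 1 := by
  have hn' : (2 : ℝ) ≤ n := by exact_mod_cast hn
  have h1 : 0 < β + n - 1 := by linarith
  have h2 : 0 < β + 1 := by linarith
  -- `0 ≤ x` and `0 < y` already hold at time 0 and suffice for positivity one step later.
  have step : ∀ x y : ℝ, 0 ≤ x → x ≤ 1 → 0 < y → y ≤ 1 →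
      (0 < (β * x + ((n : ℝ) - 1) * y) / (β + n - 1) ∧
        (β * x + ((n : ℝ) - 1) * y) / (β + n - 1) ≤ 1) ∧
      (0 < (x + β * y) / (β + 1) ∧ (x + β * y) / (β + 1) ≤ 1) := by
    intro x y hx hx' hy hy'
    have e1 : 0 ≤ β * x := by positivity
    have e2 : 0 < ((n : ℝ) - 1) * y := mul_pos (by linarith) hy
    have e3 : 0 < β * y := by positivity
    have e4 : β * x ≤ β * 1 := by gcongr
    have e5 : β * y ≤ β * 1 := by gcongr
    have e6 : ((n : ℝ) - 1) * y ≤ ((n : ℝ) - 1) * 1 :=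
      mul_le_mul_of_nonneg_left hy' (by linarith)
    refine ⟨⟨div_pos (by linarith) h1, ?_⟩, div_pos (by linarith) h2, ?_⟩
    · rw [div_le_one h1]; linarith
    · rw [div_le_one h2]; linarith
  have key : ∀ t, ∃ x y : ℝ, 0 ≤ x ∧ x ≤ 1 ∧ 0 < y ∧ y ≤ 1 ∧
      ∀ i, θ t i = if i = 0 then x else y := by
    intro t
    induction t with
    | zero => exact ⟨0, τ, le_rfl, zero_le_one, hτ0, hτ1.le, hθ0⟩
    | succ t ih =>
      obtain ⟨x, y, hx, hx', hy, hy', h⟩ := ih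
      obtain ⟨⟨s1, s2⟩, s3, s4⟩ := step x y hx hx' hy hy'
      refine ⟨_, _, s1.le, s2, s3, s4, fun i => ?_⟩
      rw [hθ]
      exact mulVec_star n hn β hβ F hF _ x y h i
  obtain ⟨x, y, hx, hx', hy, hy', h⟩ := key t
  obtain ⟨s, s'⟩ := step x y hx hx' hy hy'
  rw [hθ, mulVec_star n hn β hβ F hF _ x y h i]
  split_ifs
  · exact s
  · exact s'

/-- Star graph, WAL setting: one-step asymptotic behavior. -/
theorem star_graph_WAL_one_step
    (n : ℕ) [NeZero n] (hn : 2 ≤ n) (β τ : ℝ) (hβ : 0 < β)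
    (hτ0 : 0 < τ) (hτ1 : τ < 1)
    (F : Matrix (Fin n) (Fin n) ℝ)
    (hF : ∀ i j : Fin n, F i j =
      if i = 0 then (if j = 0 then β / (β + n - 1) else 1 / (β + n - 1))
      else (if j = 0 then 1 / (β + 1) else if j = i then β / (β + 1) else 0))
    (θ a : ℕ → Fin n → ℝ)
    (hθ0 : ∀ i : Fin n, θ 0 i = if i = 0 then 0 else τ)
    (ha0 : ∀ i : Fin n, a 0 i = if i = 0 then 1 else 0)
    (hθ : ∀ t : ℕ, θ (t + 1) = F.mulVec (θ t))
    (ha : ∀ (t : ℕ) (i : Fin n),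
      a (t + 1) i = if θ (t + 1) i ≤ F.mulVec (a t) i then 1 else 0) :
    ((∀ t : ℕ, 1 ≤ t → a t = fun _ : Fin n => (1 : ℝ)) ↔
      τ ≤ min (1 / β) (β / ((n : ℝ) - 1))) ∧
    ((∀ t : ℕ, 1 ≤ t → a t = fun _ : Fin n => (0 : ℝ)) ↔
      τ > max (1 / β) (β / ((n : ℝ) - 1))) := by
  have hn' : (2 : ℝ) ≤ n := by exact_mod_cast hn
  have h1 : 0 < β + n - 1 := by linarith
  have h2 : 0 < β + 1 := by linarith
  have h3 : 0 < (n : ℝ) - 1 := by linarith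
  have hb := theta_bounds n hn β τ hβ hτ0 hτ1 F hF θ hθ0 hθ
  have ha1 : ∀ i : Fin n, a 1 i = if i = 0 then (if τ ≤ β / ((n : ℝ) - 1) then 1 else 0)
      else (if τ ≤ 1 / β then 1 else 0) := by
    intro i
    have h := ha 0 i
    rw [hθ, mulVec_star n hn β hβ F hF _ 0 τ hθ0 i,
      mulVec_star n hn β hβ F hF _ 1 0 ha0 i] at h
    rw [show a 1 i = a (0 + 1) i from rfl, h]
    by_cases hi : i = 0
    · simp only [hi, if_true]
      have e : (β * 0 + ((n : ℝ) - 1) * τ) / (β + n - 1) ≤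
          (β * 1 + ((n : ℝ) - 1) * 0) / (β + n - 1) ↔ τ ≤ β / ((n : ℝ) - 1) := by
        rw [div_le_div_iff_of_pos_right h1, le_div_iff₀ h3]
        constructor <;> intro <;> linarith
      simp only [e]
    · simp only [hi, if_false]
      have e : (0 + β * τ) / (β + 1) ≤ (1 + β * 0) / (β + 1) ↔ τ ≤ 1 / β := by
        rw [div_le_div_iff_of_pos_right h2, le_div_iff₀ hβ]
        constructor <;> intro <;> linarith
      simp only [e]
  have hl : (⟨1, hn⟩ : Fin n) ≠ 0 := by
    intro h
    simpa using congrArg Fin.val h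
  rw [le_min_iff, gt_iff_lt, max_lt_iff]
  refine ⟨⟨fun h => ?_, ?_⟩, ⟨fun h => ?_, ?_⟩⟩
  · have c := ha1 0
    have l := ha1 ⟨1, hn⟩
    rw [h 1 le_rfl] at c l
    constructor
    · by_contra hc
      simp [hl, -one_div, hc] at l
    · by_contra hc
      simp [hc] at c
  · rintro ⟨hle1, hle2⟩ t ht
    induction t, ht using Nat.le_induction with
    | base => funext i; rw [ha1]; simp only [hle1, hle2, if_true, ite_self]
    | succ t _ ih =>
      funext i
      rw [ha, mulVec_star n hn β hβ F hF _ 1 1 (by simp [ih]) i]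
      have e1 : (β * 1 + ((n : ℝ) - 1) * 1) / (β + n - 1) = 1 := by
        rw [div_eq_one_iff_eq h1.ne']; ring
      have e2 : (1 + β * 1) / (β + 1) = 1 := by
        rw [div_eq_one_iff_eq h2.ne']; ring
      rw [e1, e2, ite_self, if_pos (hb t i).2]
  · have c := ha1 0
    have l := ha1 ⟨1, hn⟩
    rw [h 1 le_rfl] at c l
    constructor
    · by_contra hc
      simp [hl, -one_div, not_lt.mp hc] at l
    · by_contra hc
      simp [not_lt.mp hc] at c
  · rintro ⟨hlt1, hlt2⟩ t ht
    induction t, ht using Nat.le_induction with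
    | base =>
      funext i
      rw [ha1]
      simp only [not_le.mpr hlt1, not_le.mpr hlt2, if_false, ite_self]
    | succ t _ ih =>
      funext i
      rw [ha, mulVec_star n hn β hβ F hF _ 0 0 (by simp [ih]) i]
      simp only [mul_zero, add_zero, zero_div, ite_self]
      rw [if_neg (not_le.mpr (hb t i).1)]
end

section
/- Consider the threshold model on n agents with star graph centered at agent 1 in the UAL setting (F the star-graph matrix; G with first row (1/n, …, 1/n) and, for i ≥ 2, row i with 1/2 in columns 1 and i), initial condition θ(0) = (0, τ, …, τ)ᵀ, 0 < τ < 1, a(0) = (1, 0, …, 0)ᵀ. Then a(t) = 𝟙 for all t ≥ 1 if and only if τ ≤ min{(β+n−1)/(n(n−1)), (β+1)/(2β)}, and a(t) = 0 for all t ≥ 1 if and only if τ > max{(β+n−1)/(n(n−1)), (β+1)/(2β)}. -/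
/-!
Every vector in the problem takes one value `c` at the centre and a common value `d` at the leaves,
and `F` and `G` preserve this shape, so the dynamics reduce to pairs `(c, d)`
(`hub_mulVec_zero`, `hub_mulVec_leaf`).

In this reduction `θ 1 = ((n - 1) τ / (β + n - 1), β τ / (β + 1))`, while the centre and the leaves
see the actions `1 / n` and `1 / 2`. Comparing coordinates, `a 1 = 𝟙` iff `τ` is at most both
thresholds and `a 1 = 0` iff `τ` exceeds both. Both states persist: `F` is row-stochastic
and averages positive weights, so `0 < θ t < 1` in every coordinate for `t ≥ 1`, whereas `G`
fixes both `𝟙` and `0`.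
-/

/-- The vector with value `c` at the centre `0` of the star and `d` at every leaf. -/
def hubVec (n : ℕ) [NeZero n] (c d : ℝ) : Fin n → ℝ := fun i => if i = 0 then c else d

lemma hub_mulVec_zero {n : ℕ} [NeZero n] (M : Matrix (Fin n) (Fin n) ℝ) (x y c d : ℝ)
    (hM : ∀ j, M 0 j = if j = 0 then x else y) :
    M.mulVec (hubVec n c d) 0 = x * c + (n - 1) * (y * d) := by
  have h : ∀ j : Fin n, M 0 j * hubVec n c d j
      = y * d + if j = 0 then x * c - y * d else 0 := by
    intro j
    rw [hM, hubVec]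
    split_ifs <;> ring
  simp only [Matrix.mulVec, dotProduct, h, Finset.sum_add_distrib, Finset.sum_ite_eq',
    Finset.sum_const, Finset.card_univ, Fintype.card_fin, Finset.mem_univ, if_true, nsmul_eq_mul]
  ring

lemma hub_mulVec_leaf {n : ℕ} [NeZero n] (M : Matrix (Fin n) (Fin n) ℝ) (x y c d : ℝ)
    (i : Fin n) (hi : i ≠ 0)
    (hM : ∀ j, M i j = if j = 0 then x else if j = i then y else 0) :
    M.mulVec (hubVec n c d) i = x * c + y * d := by
  have h : ∀ j : Fin n, M i j * hubVec n c d j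
      = (if j = 0 then x * c else 0) + if j = i then y * d else 0 := by
    intro j
    rw [hM, hubVec]
    by_cases h0 : j = 0
    · subst h0
      simp [hi.symm]
    · by_cases h1 : j = i <;> simp [h0, h1, hi]
  simp [Matrix.mulVec, dotProduct, h, Finset.sum_add_distrib]


/-- Star graph, UAL setting: one-step asymptotic behavior. -/
theorem star_graph_UAL_one_step
    (n : ℕ) [NeZero n] (hn : 2 ≤ n) (β τ : ℝ) (hβ : 0 < β)
    (hτ0 : 0 < τ) (hτ1 : τ < 1)
    (F G : Matrix (Fin n) (Fin n) ℝ)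
    (hF : ∀ i j : Fin n, F i j =
      if i = 0 then (if j = 0 then β / (β + n - 1) else 1 / (β + n - 1))
      else (if j = 0 then 1 / (β + 1) else if j = i then β / (β + 1) else 0))
    (hG : ∀ i j : Fin n, G i j =
      if i = 0 then 1 / (n : ℝ)
      else (if j = 0 then 1 / 2 else if j = i then 1 / 2 else 0))
    (θ a : ℕ → Fin n → ℝ)
    (hθ0 : ∀ i : Fin n, θ 0 i = if i = 0 then 0 else τ)
    (ha0 : ∀ i : Fin n, a 0 i = if i = 0 then 1 else 0)
    (hθ : ∀ t : ℕ, θ (t + 1) = F.mulVec (θ t))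
    (ha : ∀ (t : ℕ) (i : Fin n),
      a (t + 1) i = if θ (t + 1) i ≤ G.mulVec (a t) i then 1 else 0) :
    ((∀ t : ℕ, 1 ≤ t → a t = fun _ : Fin n => (1 : ℝ)) ↔
      τ ≤ min ((β + n - 1) / ((n : ℝ) * (n - 1))) ((β + 1) / (2 * β))) ∧
    ((∀ t : ℕ, 1 ≤ t → a t = fun _ : Fin n => (0 : ℝ)) ↔
      τ > max ((β + n - 1) / ((n : ℝ) * (n - 1))) ((β + 1) / (2 * β))) := by
  have hn2 : (2 : ℝ) ≤ n := by exact_mod_cast hn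
  have hD : 0 < β + n - 1 := by linarith
  have hN : (0 : ℝ) < n * (n - 1) := by nlinarith
  have hFv : ∀ c d, F.mulVec (hubVec n c d)
      = hubVec n ((β * c + (n - 1) * d) / (β + n - 1)) ((c + β * d) / (β + 1)) := by
    intro c d
    ext i
    by_cases hi : i = 0
    · subst hi
      rw [hub_mulVec_zero F _ _ c d (fun j => by rw [hF, if_pos rfl]), hubVec, if_pos rfl]
      ring
    · rw [hub_mulVec_leaf F _ _ c d i hi (fun j => by rw [hF, if_neg hi]), hubVec, if_neg hi]
      ring
  have hGv : ∀ c d, G.mulVec (hubVec n c d)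
      = hubVec n ((c + (n - 1) * d) / n) ((c + d) / 2) := by
    intro c d
    ext i
    by_cases hi : i = 0
    · subst hi
      rw [hub_mulVec_zero G (1 / n) (1 / n) c d (fun j => by rw [hG, if_pos rfl, ite_self]),
        hubVec, if_pos rfl]
      ring
    · rw [hub_mulVec_leaf G _ _ c d i hi (fun j => by rw [hG, if_neg hi]), hubVec, if_neg hi]
      ring
  have hconst : ∀ x : ℝ, (fun _ : Fin n => x) = hubVec n x x := by
    intro x
    ext i
    simp [hubVec]
  have hGconst : ∀ x : ℝ, G.mulVec (fun _ => x) = fun _ => x := by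
    intro x
    rw [hconst, hGv]
    congr 1
    · field_simp
      ring
    · ring
  have hθ1 : θ 1 = hubVec n ((n - 1) * τ / (β + n - 1)) (β * τ / (β + 1)) := by
    have h0 : θ 0 = hubVec n 0 τ := funext hθ0
    rw [hθ 0, h0, hFv]
    simp
  have hG0 : G.mulVec (a 0) = hubVec n (1 / n) (1 / 2) := by
    have h0 : a 0 = hubVec n 1 0 := funext ha0
    rw [h0, hGv]
    simp
  have hinv : ∀ t, ∃ c d, θ (t + 1) = hubVec n c d ∧ 0 < c ∧ c < 1 ∧ 0 < d ∧ d < 1 := by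
    intro t
    induction t with
    | zero =>
      refine ⟨_, _, hθ1, ?_, ?_, ?_, ?_⟩
      · exact div_pos (mul_pos (by linarith) hτ0) hD
      · rw [div_lt_one hD]
        nlinarith
      · positivity
      · rw [div_lt_one (by linarith)]
        nlinarith
    | succ t ih =>
      obtain ⟨c, d, h, hc0, hc1, hd0, hd1⟩ := ih
      refine ⟨_, _, by rw [hθ, h, hFv], ?_, ?_, ?_, ?_⟩
      · exact div_pos (add_pos (by positivity) (mul_pos (by linarith) hd0)) hD
      · rw [div_lt_one hD]
        nlinarith
      · positivity
      · rw [div_lt_one (by linarith)]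
        nlinarith
  have hpos : ∀ t i, 0 < θ (t + 1) i ∧ θ (t + 1) i < 1 := by
    intro t i
    obtain ⟨c, d, h, hc0, hc1, hd0, hd1⟩ := hinv t
    rw [h, hubVec]
    split_ifs
    · exact ⟨hc0, hc1⟩
    · exact ⟨hd0, hd1⟩
  have hone : (∀ t : ℕ, 1 ≤ t → a t = fun _ : Fin n => (1 : ℝ)) ↔ a 1 = fun _ => 1 := by
    refine ⟨fun h => h 1 le_rfl, fun h t ht => ?_⟩
    induction t, ht using Nat.le_induction with
    | base => exact h
    | succ t _ ih =>
      ext i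
      rw [ha, ih, hGconst, if_pos (hpos t i).2.le]
  have hzero : (∀ t : ℕ, 1 ≤ t → a t = fun _ : Fin n => (0 : ℝ)) ↔ a 1 = fun _ => 0 := by
    refine ⟨fun h => h 1 le_rfl, fun h t ht => ?_⟩
    induction t, ht using Nat.le_induction with
    | base => exact h
    | succ t _ ih =>
      ext i
      rw [ha, ih, hGconst, if_neg (hpos t i).1.not_ge]
  have hcentre : (n - 1) * τ / (β + n - 1) ≤ 1 / n ↔ τ ≤ (β + n - 1) / ((n : ℝ) * (n - 1)) := by
    rw [div_le_div_iff₀ hD (by linarith), le_div_iff₀ hN]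
    constructor <;> intro h <;> linarith
  have hleaf : β * τ / (β + 1) ≤ 1 / 2 ↔ τ ≤ (β + 1) / (2 * β) := by
    rw [div_le_div_iff₀ (by linarith) two_pos, le_div_iff₀ (by linarith)]
    constructor <;> intro h <;> linarith
  have ha1 : a 1 = hubVec n (if τ ≤ (β + n - 1) / ((n : ℝ) * (n - 1)) then 1 else 0)
      (if τ ≤ (β + 1) / (2 * β) then 1 else 0) := by
    ext i
    rw [ha 0, hG0, hθ1]
    by_cases hi : i = 0
    · simp only [hubVec, if_pos hi, hcentre]
    · simp only [hubVec, if_neg hi, hleaf]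
  -- Since `n ≥ 2` the star has a leaf, so both coordinates of a `hubVec` are visible.
  have hinj : ∀ c d x : ℝ, (hubVec n c d = fun _ => x) ↔ c = x ∧ d = x := by
    intro c d x
    constructor
    · intro h
      have hne : (⟨1, hn⟩ : Fin n) ≠ 0 := by
        intro h'
        simpa using congrArg Fin.val h'
      exact ⟨by simpa [hubVec] using congrFun h 0,
        by simpa [hubVec, hne] using congrFun h ⟨1, hn⟩⟩
    · rintro ⟨rfl, rfl⟩
      exact (hconst _).symm
  rw [hone, hzero, ha1, hinj, hinj, le_min_iff, gt_iff_lt, max_lt_iff]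
  simp
end

section
/- Consider the threshold dynamics θ(t+1) = F θ(t) on n agents (n odd, n ≥ 3) with the ring-graph circulant matrix F (diagonal β/(β+2), cyclic adjacent off-diagonal entries 1/(β+2)), with β ≥ 1 and θ(0) = (0, τ, …, τ)ᵀ, 0 < τ < 1. Then for all t ≥ 1 and all i = 1, …, h with h = (n−1)/2, one has θ_i(t) ≤ θ_{i+1}(t). -/
/-!
Put `d i = θ (i + 1) - θ i`. The initial vector and `F` are invariant under the reflection `i ↦ -i`
of the ring, so `θ t` stays even. The differences satisfy
`(β + 2) d' i = β d i + d (i + 1) + d (i - 1)`, and evenness supplies the boundary values on the half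
ring `0, …, h`: `d h = 0` (because `-h = h + 1` modulo `n = 2 h + 1`) and `d (-1) = -d 0`.
Hence `d ≥ 0` on `0, …, h - 1` is preserved: in the interior all coefficients are nonnegative, and at
`0` the update reads `(β + 2) d' 0 = (β - 1) d 0 + d 1`, which is where `β ≥ 1` enters.
-/

/-- One step of the dynamics, as a three-term recurrence. The bound `3 ≤ n` makes `i`, `i + 1` and
`i - 1` pairwise distinct. -/
lemma ring_mulVec (n : ℕ) [NeZero n] (hn : 3 ≤ n) (β : ℝ)
    (F : Matrix (Fin n) (Fin n) ℝ)
    (hF : ∀ i j : Fin n, F i j =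
      if i = j then β / (β + 2)
      else if j = i + 1 ∨ i = j + 1 then 1 / (β + 2) else 0)
    (x : Fin n → ℝ) (i : Fin n) :
    F.mulVec x i = (β * x i + x (i + 1) + x (i - 1)) / (β + 2) := by
  have h1 : (1 : Fin n) ≠ 0 := by
    intro h
    have := congrArg Fin.val h
    rw [Fin.val_one', Fin.val_zero, Nat.mod_eq_of_lt (by omega)] at this
    omega
  have h2 : (1 : Fin n) + 1 ≠ 0 := by
    intro h
    have := congrArg Fin.val h
    rw [Fin.val_add, Fin.val_one', Fin.val_zero, Nat.mod_eq_of_lt (a := 1) (by omega),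
      Nat.mod_eq_of_lt (by omega)] at this
    omega
  have hsplit : ∀ j, F i j * x j = (if j = i then β / (β + 2) * x j else 0)
      + (if j = i + 1 then 1 / (β + 2) * x j else 0)
      + (if j = i - 1 then 1 / (β + 2) * x j else 0) := by
    intro j
    rw [hF]
    by_cases a : j = i
    · subst a
      have e1 : ¬ j = j + 1 := by simpa using h1
      have e2 : ¬ j = j - 1 := by
        intro h
        rw [eq_sub_iff_add_eq] at h
        exact e1 h.symm
      simp [e1, e2]
    · have a' : ¬ i = j := fun h => a h.symm
      by_cases b : j = i + 1
      · have c : ¬ j = i - 1 := by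
          intro h
          rw [b, eq_sub_iff_add_eq, add_assoc] at h
          exact h2 (by simpa using h)
        rw [if_neg a', if_pos (Or.inl b), if_neg a, if_pos b, if_neg c]
        ring
      · have : i = j + 1 ↔ j = i - 1 := by
          rw [eq_sub_iff_add_eq, eq_comm]
        by_cases c : j = i - 1
        · rw [if_neg a', if_pos (Or.inr (this.2 c)), if_neg a, if_neg b, if_pos c]
          ring
        · rw [if_neg a', if_neg (by tauto), if_neg a, if_neg b, if_neg c]
          ring
  simp only [Matrix.mulVec, dotProduct, hsplit, Finset.sum_add_distrib, Finset.sum_ite_eq',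
    Finset.mem_univ, if_true]
  ring

/-- Ring graph, β ≥ 1: spatial monotonicity of the thresholds. -/
theorem ring_graph_threshold_spatial_monotonicity
    (n h : ℕ) [NeZero n] (hn : 3 ≤ n) (hh : n = 2 * h + 1)
    (β τ : ℝ) (hβ : 1 ≤ β) (hτ0 : 0 < τ) (hτ1 : τ < 1)
    (F : Matrix (Fin n) (Fin n) ℝ)
    (hF : ∀ i j : Fin n, F i j =
      if i = j then β / (β + 2)
      else if j = i + 1 ∨ i = j + 1 then 1 / (β + 2) else 0)
    (θ : ℕ → Fin n → ℝ)
    (hθ0 : ∀ i : Fin n, θ 0 i = if i = 0 then 0 else τ)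
    (hθ : ∀ t : ℕ, θ (t + 1) = F.mulVec (θ t)) :
    ∀ t : ℕ, 1 ≤ t → ∀ i : Fin n, (i : ℕ) + 1 ≤ h → θ t i ≤ θ t (i + 1) := by
  have step : ∀ t i, θ (t + 1) i
      = (β * θ t i + θ t (i + 1) + θ t (i - 1)) / (β + 2) := by
    intro t i
    rw [hθ, ring_mulVec n hn β F hF]
  have even : ∀ t i, θ t (-i) = θ t i := by
    intro t
    induction t with
    | zero => intro i; simp [hθ0]
    | succ t ih =>
      intro i
      have e1 : -i + 1 = -(i - 1) := by abel
      have e2 : -i - 1 = -(i + 1) := by abel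
      rw [step, step, e1, e2, ih, ih, ih]
      ring
  have val1 : ((1 : Fin n) : ℕ) = 1 := by
    rw [Fin.val_one', Nat.mod_eq_of_lt (by omega)]
  have valadd : ∀ i : Fin n, (i : ℕ) + 1 < n → ((i + 1 : Fin n) : ℕ) = i + 1 := by
    intro i hi
    rw [Fin.val_add, val1, Nat.mod_eq_of_lt hi]
  have mono : ∀ t, ∀ i : Fin n, (i : ℕ) + 1 ≤ h → θ t i ≤ θ t (i + 1) := by
    intro t
    induction t with
    | zero =>
      intro i hi
      have hne : i + 1 ≠ 0 := by
        intro e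
        have := valadd i (by omega)
        rw [e, Fin.val_zero] at this
        omega
      rw [hθ0, hθ0, if_neg hne]
      split_ifs <;> linarith
    | succ t ih =>
      intro i hi
      have hv := valadd i (by omega)
      have hup : θ t (i + 1) ≤ θ t (i + 1 + 1) := by
        by_cases c : (i : ℕ) + 2 ≤ h
        · exact ih (i + 1) (by omega)
        · -- Here `i + 1 = h`, so `i + 1 + 1` is the reflection of `i + 1`.
          have hv2 := valadd (i + 1) (by omega)
          have e : i + 1 + 1 = -(i + 1) := by
            rw [eq_neg_iff_add_eq_zero]
            apply Fin.ext
            rw [Fin.val_add, hv2, hv, Fin.val_zero]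
            have : (i : ℕ) + 1 + 1 + (i + 1) = n := by omega
            rw [this, Nat.mod_self]
          rw [e, even]
      have h0 := ih i hi
      rw [step, step, add_sub_cancel_right]
      apply div_le_div_of_nonneg_right _ (by linarith)
      by_cases c : i = 0
      · subst c
        have e : θ t (0 - 1) = θ t (0 + 1) := by
          rw [zero_sub, zero_add, even]
        rw [e]
        nlinarith [mul_nonneg (sub_nonneg.2 hβ) (sub_nonneg.2 h0)]
      · have hpos : 0 < (i : ℕ) := Nat.pos_of_ne_zero fun e => c (Fin.ext (by simpa using e))
        have hle : (1 : Fin n) ≤ i := by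
          rw [Fin.le_def, val1]; exact hpos
        have hs : ((i - 1 : Fin n) : ℕ) = i - 1 := by
          rw [Fin.sub_val_of_le hle, val1]
        have hdn := ih (i - 1) (by omega)
        rw [sub_add_cancel] at hdn
        nlinarith [mul_nonneg (sub_nonneg.2 hβ) (sub_nonneg.2 h0)]
  exact fun t _ => mono t
end

section
/- Consider the threshold dynamics θ(t+1) = F θ(t) on n agents (n odd, n ≥ 3) with the ring-graph circulant matrix F (diagonal β/(β+2), cyclic adjacent off-diagonal entries 1/(β+2)), with β ≥ 1 and θ(0) = (0, τ, …, τ)ᵀ, 0 < τ < 1. Then for all t ≥ 1 and all i = 1, …, h with h = (n−1)/2, one has θ_i(t−1) ≤ θ_{i+1}(t). -/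
/-!
The row of `F` at `i` averages `θ i` (weight `β`) with its neighbours `θ (i + 1)` and `θ (i - 1)`
(weight `1` each). Hence `(β + 2) * (θ (t + 1) (i + 1) - θ t i)` equals
`β * (θ t (i + 1) - θ t i) + (θ t (i + 2) - θ t i)`, and the claim follows once `θ t` is known to
be nondecreasing along `0, 1, …, h` at each fixed time, together with the reflection symmetry
`θ t (-i) = θ t i`, which gives `θ t (h + 1) = θ t h`.

Symmetry and spatial monotonicity are preserved by the dynamics: the increments
`d i = θ t (i + 1) - θ t i` evolve by `(β + 2) * d' i = β * d i + d (i + 1) + d (i - 1)`, where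
`d h = 0` and `d (-1) = -d 0` by symmetry. At `i = 0` the coefficient of `d 0` becomes `β - 1`,
which is where `1 ≤ β` enters.
-/

/-- One step of the dynamics at a site. As `n ≥ 3`, the sites `i`, `i + 1` and `i - 1` are distinct,
so the three kinds of entries of `F` do not overlap. -/
lemma ring_step {n : ℕ} [NeZero n] (hn : 3 ≤ n) {β : ℝ} (hβ : 1 ≤ β)
    {F : Matrix (Fin n) (Fin n) ℝ}
    (hF : ∀ i j : Fin n, F i j =
      if i = j then β / (β + 2)
      else if j = i + 1 ∨ i = j + 1 then 1 / (β + 2) else 0)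
    (x : Fin n → ℝ) (i : Fin n) :
    (β + 2) * F.mulVec x i = β * x i + x (i + 1) + x (i - 1) := by
  have h1 : (1 : Fin n) ≠ 0 := by
    intro h
    have := congrArg Fin.val h
    rw [Fin.val_one', Fin.val_zero, Nat.mod_eq_of_lt (by omega)] at this
    omega
  have h2 : (1 : Fin n) + 1 ≠ 0 := by
    intro h
    have := congrArg Fin.val h
    rw [Fin.val_add, Fin.val_one', Fin.val_zero, Nat.mod_eq_of_lt (a := 1) (by omega),
      Nat.mod_eq_of_lt (by omega)] at this
    omega
  have key : ∀ j, F i j * x j = (if j = i then β / (β + 2) * x j else 0)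
      + (if j = i + 1 then 1 / (β + 2) * x j else 0)
      + (if j = i - 1 then 1 / (β + 2) * x j else 0) := by
    intro j
    rw [hF]
    have e : i = j + 1 ↔ j = i - 1 := by rw [eq_sub_iff_add_eq, eq_comm]
    simp only [e]
    by_cases a : j = i
    · subst a
      have b : ¬ j = j + 1 := by simpa using h1
      have c : ¬ j = j - 1 := by
        rw [eq_sub_iff_add_eq]; simpa using h1
      simp [b, c]
    · by_cases b : j = i + 1
      · have c : ¬ j = i - 1 := by
          rw [b, eq_sub_iff_add_eq, add_assoc]; simpa using h2
        simp only [b, if_true]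
        have b' : ¬ i = i + 1 := by simpa using h1
        have c' : ¬ i + 1 = i - 1 := by rwa [b] at c
        simp [b', c', h1]
      · simp [a, b, Ne.symm a]
  have hpos : β + 2 ≠ 0 := by linarith
  simp only [Matrix.mulVec, dotProduct, key, Finset.sum_add_distrib, Finset.sum_ite_eq',
    Finset.mem_univ, if_true]
  field_simp

/-- Next to the site opposite to `0`, symmetry replaces the missing monotonicity:
`h + 1 = -h` on the ring, so the last increment `x (h + 1) - x h` is zero. -/
lemma ring_mono_next {n h : ℕ} [NeZero n] (hn : 3 ≤ n) (hh : n = 2 * h + 1) {x : Fin n → ℝ}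
    (hs : ∀ i, x (-i) = x i) (hm : ∀ i : Fin n, (i : ℕ) + 1 ≤ h → x i ≤ x (i + 1))
    (i : Fin n) (hi : (i : ℕ) + 1 ≤ h) : x (i + 1) ≤ x (i + 1 + 1) := by
  have hv : ((i + 1 : Fin n) : ℕ) = i + 1 := by
    rw [Fin.val_add, Fin.val_one', Nat.mod_eq_of_lt (a := 1) (by omega),
      Nat.mod_eq_of_lt (by omega)]
  by_cases hc : (i : ℕ) + 2 ≤ h
  · exact hm _ (by omega)
  · have : i + 1 + 1 = -(i + 1) := by
      apply eq_neg_of_add_eq_zero_left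
      apply Fin.ext
      rw [Fin.val_add, Fin.val_add (i + 1), hv, Fin.val_one', Fin.val_zero,
        Nat.mod_eq_of_lt (a := 1) (by omega), Nat.mod_eq_of_lt (a := (i : ℕ) + 1 + 1) (by omega)]
      have : (i : ℕ) + 1 + 1 + (i + 1) = n := by omega
      rw [this, Nat.mod_self]
    rw [this, hs]

/-- Reflection symmetry and monotonicity along `0, …, h` are preserved at all times. -/
lemma ring_invariant
    (n h : ℕ) [NeZero n] (hn : 3 ≤ n) (hh : n = 2 * h + 1)
    (β τ : ℝ) (hβ : 1 ≤ β) (hτ0 : 0 < τ)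
    (F : Matrix (Fin n) (Fin n) ℝ)
    (hF : ∀ i j : Fin n, F i j =
      if i = j then β / (β + 2)
      else if j = i + 1 ∨ i = j + 1 then 1 / (β + 2) else 0)
    (θ : ℕ → Fin n → ℝ)
    (hθ0 : ∀ i : Fin n, θ 0 i = if i = 0 then 0 else τ)
    (hθ : ∀ t : ℕ, θ (t + 1) = F.mulVec (θ t)) (t : ℕ) :
    (∀ i, θ t (-i) = θ t i) ∧ ∀ i : Fin n, (i : ℕ) + 1 ≤ h → θ t i ≤ θ t (i + 1) := by
  have hpos : 0 < β + 2 := by linarith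
  induction t with
  | zero =>
    refine ⟨fun i => by simp [hθ0], fun i hi => ?_⟩
    have : i + 1 ≠ 0 := by
      intro h0
      have := congrArg Fin.val h0
      rw [Fin.val_add, Fin.val_one', Nat.mod_eq_of_lt (a := 1) (by omega),
        Nat.mod_eq_of_lt (by omega), Fin.val_zero] at this
      omega
    rw [hθ0, hθ0, if_neg this]
    split_ifs <;> linarith
  | succ t ih =>
    obtain ⟨hs, hm⟩ := ih
    have step : ∀ i, (β + 2) * θ (t + 1) i = β * θ t i + θ t (i + 1) + θ t (i - 1) := by
      intro i
      rw [hθ]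
      exact ring_step hn hβ hF (θ t) i
    refine ⟨fun i => ?_, fun i hi => ?_⟩
    · apply mul_left_cancel₀ hpos.ne'
      have e1 : -i + 1 = -(i - 1) := by abel
      have e2 : -i - 1 = -(i + 1) := by abel
      rw [step, step, e1, e2, hs, hs, hs]
      ring
    · refine le_of_mul_le_mul_left ?_ hpos
      rw [step, step, add_sub_cancel_right]
      have d1 := ring_mono_next hn hh hs hm i hi
      have d0 := hm i hi
      by_cases hi0 : i = 0
      · subst hi0
        have := hs 1
        rw [zero_add] at *
        rw [zero_sub, this]
        nlinarith
      · have hv : ((i - 1 : Fin n) : ℕ) = i - 1 := by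
          have h0 : (i : ℕ) ≠ 0 := fun h => hi0 (Fin.ext h)
          have hle : (1 : Fin n) ≤ i := by
            rw [Fin.le_def, Fin.val_one', Nat.mod_eq_of_lt (by omega)]
            omega
          rw [Fin.sub_val_of_le hle, Fin.val_one', Nat.mod_eq_of_lt (by omega)]
        have d2 := hm (i - 1) (by omega)
        rw [sub_add_cancel] at d2
        nlinarith


/-- Ring graph, β ≥ 1: space-time monotonicity of the thresholds. -/
theorem ring_graph_threshold_spacetime_monotonicity
    (n h : ℕ) [NeZero n] (hn : 3 ≤ n) (hh : n = 2 * h + 1)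
    (β τ : ℝ) (hβ : 1 ≤ β) (hτ0 : 0 < τ) (hτ1 : τ < 1)
    (F : Matrix (Fin n) (Fin n) ℝ)
    (hF : ∀ i j : Fin n, F i j =
      if i = j then β / (β + 2)
      else if j = i + 1 ∨ i = j + 1 then 1 / (β + 2) else 0)
    (θ : ℕ → Fin n → ℝ)
    (hθ0 : ∀ i : Fin n, θ 0 i = if i = 0 then 0 else τ)
    (hθ : ∀ t : ℕ, θ (t + 1) = F.mulVec (θ t)) :
    ∀ t : ℕ, 1 ≤ t → ∀ i : Fin n, (i : ℕ) + 1 ≤ h → θ (t - 1) i ≤ θ t (i + 1) := by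
  intro t ht i hi
  obtain ⟨s, rfl⟩ : ∃ s, t = s + 1 := ⟨t - 1, by omega⟩
  rw [Nat.add_sub_cancel]
  obtain ⟨hs, hm⟩ := ring_invariant n h hn hh β τ hβ hτ0 F hF θ hθ0 hθ s
  have hpos : 0 < β + 2 := by linarith
  have d0 := hm i hi
  have d1 := ring_mono_next hn hh hs hm i hi
  refine le_of_mul_le_mul_left ?_ hpos
  rw [hθ, ring_step hn hβ hF, add_sub_cancel_right]
  nlinarith
end
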